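/- arXiv:0910.5662 — 3 statements merged into one kernel-verified Lean document; each statement's English description precedes it below -/
import Mathlib

section
/- Let Δ = [a,b] ⊂ ℝ ⊂ ℂ be a segment, let (n_k) be a strictly increasing sequence of natural numbers, and let (q_{n_k}) be a sequence of complex polynomials with deg q_{n_k} ≤ n_k and sup-norm ‖q_{n_k}‖_Δ = 1 for every k. Then the set A = {z ∈ Δ : lim_{k→∞} |q_{n_k}(z)|^{1/n_k} = 0} is a polar subset of ℂ. -/
open Filter Metric

noncomputable section

/-- A subharmonic function on `ℂ` with values in `[-∞, ∞)`: upper semicontinuous,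
never `+∞`, and dominated on every closed disk by every continuous function which is
harmonic inside the disk and dominates it on the boundary circle. -/
def SubharmonicFn (u : ℂ → EReal) : Prop :=
  UpperSemicontinuous u ∧ (∀ z, u z ≠ ⊤) ∧
  ∀ (c : ℂ) (r : ℝ), 0 < r →
    ∀ h : ℂ → ℝ, ContinuousOn h (closedBall c r) →
      (∃ F : ℂ → ℂ, DifferentiableOn ℂ F (ball c r) ∧ ∀ z ∈ ball c r, h z = (F z).re) →
      (∀ z ∈ sphere c r, u z ≤ ((h z : ℝ) : EReal)) →
      ∀ z ∈ closedBall c r, u z ≤ ((h z : ℝ) : EReal)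

/-- A set `S ⊆ ℂ` is polar if it is contained in the `-∞` set of a subharmonic
function on `ℂ` which is not identically `-∞`. -/
def PolarSet (S : Set ℂ) : Prop :=
  ∃ u : ℂ → EReal, SubharmonicFn u ∧ (∃ z, u z ≠ ⊥) ∧ ∀ z ∈ S, u z = ⊥

namespace PolarAux

/-- maximum principle for functions supported from below by real parts of holomorphic functions -/
lemma max_principle (c : ℂ) (r : ℝ) (w : ℂ → ℝ) (hw : ContinuousOn w (closedBall c r))
    (hG : ∀ z₀ ∈ ball c r, ∃ G : ℂ → ℂ, (∀ᶠ z in nhds z₀, DifferentiableAt ℂ G z) ∧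
      (∀ᶠ z in nhds z₀, (G z).re ≤ w z) ∧ (G z₀).re = w z₀)
    (hs : ∀ z ∈ sphere c r, w z ≤ 0) : ∀ z ∈ closedBall c r, w z ≤ 0 := by
  intro z hz
  by_contra hcon
  push Not at hcon
  obtain ⟨z₁, hz₁, hmax⟩ := (isCompact_closedBall c r).exists_isMaxOn ⟨z, hz⟩ hw
  have hpos : 0 < w z₁ := hcon.trans_le (hmax hz)
  set M := w z₁
  set K : Set ℂ := closedBall c r ∩ w ⁻¹' {M}
  have hK : IsCompact K :=
    (isCompact_closedBall c r).of_isClosed_subset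
      (hw.preimage_isClosed_of_isClosed isClosed_closedBall isClosed_singleton)
      Set.inter_subset_left
  obtain ⟨z₀, hz₀, hfar⟩ := hK.exists_isMaxOn ⟨z₁, hz₁, rfl⟩
    (continuous_id.dist (continuous_const (y := c))).continuousOn
  have hw0 : w z₀ = M := hz₀.2
  have hball : z₀ ∈ ball c r := by
    rcases lt_or_eq_of_le (mem_closedBall.1 hz₀.1) with h | h
    · exact h
    · have := hs z₀ h; linarith
  obtain ⟨G, hGd, hGle, hGe⟩ := hG z₀ hball
  have hlm : IsLocalMax (norm ∘ fun z => Complex.exp (G z)) z₀ := by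
    filter_upwards [hGle, isOpen_ball.mem_nhds hball] with y hy hyb
    simp only [Function.comp, Complex.norm_exp]
    apply Real.exp_le_exp.2
    rw [hGe, hw0]
    exact hy.trans (hmax (ball_subset_closedBall hyb))
  have hconst := Complex.norm_eventually_eq_of_isLocalMax
    (hGd.mono fun z hz => hz.cexp) hlm
  have hnear : ∀ᶠ y in nhds z₀, y ∈ K := by
    filter_upwards [hGle, isOpen_ball.mem_nhds hball, hconst] with y hy hyb hc
    simp only [Complex.norm_exp, Real.exp_eq_exp] at hc
    refine ⟨ball_subset_closedBall hyb, ?_⟩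
    apply le_antisymm (hmax (ball_subset_closedBall hyb))
    rw [← hw0, ← hGe, ← hc]; exact hy
  -- a further point
  by_cases hzc : z₀ = c
  · have : ∀ᶠ t : ℝ in nhdsWithin 0 (Set.Ioi 0), z₀ + (t : ℂ) ∈ K := by
      have ht : Tendsto (fun t : ℝ => z₀ + (t : ℂ)) (nhdsWithin 0 (Set.Ioi 0)) (nhds z₀) := by
        have : Continuous (fun t : ℝ => z₀ + (t : ℂ)) := by fun_prop
        have h := this.tendsto 0
        simp only [Complex.ofReal_zero, add_zero] at h
        exact h.mono_left nhdsWithin_le_nhds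
      exact ht.eventually hnear
    obtain ⟨t, htK, ht⟩ := (this.and self_mem_nhdsWithin).exists
    have h1 := hfar htK
    simp only [id, Set.mem_ofPred_eq] at h1
    rw [hzc, dist_self, dist_eq_norm] at h1
    simp at h1
    have : (0:ℝ) < t := ht
    simp [h1] at this
  · have : ∀ᶠ t : ℝ in nhdsWithin 0 (Set.Ioi 0), z₀ + (t : ℂ) * (z₀ - c) ∈ K := by
      have ht : Tendsto (fun t : ℝ => z₀ + (t : ℂ) * (z₀ - c)) (nhdsWithin 0 (Set.Ioi 0))
          (nhds z₀) := by
        have : Continuous (fun t : ℝ => z₀ + (t : ℂ) * (z₀ - c)) := by fun_prop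
        have h := this.tendsto 0
        simp only [Complex.ofReal_zero, zero_mul, add_zero] at h
        exact h.mono_left nhdsWithin_le_nhds
      exact ht.eventually hnear
    obtain ⟨t, htK, ht⟩ := (this.and self_mem_nhdsWithin).exists
    have h1 := hfar htK
    simp only [id, Set.mem_ofPred_eq] at h1
    have ht : (0:ℝ) < t := ht
    have e : z₀ + (t : ℂ) * (z₀ - c) - c = ((1 + t : ℝ) : ℂ) * (z₀ - c) := by push_cast; ring
    rw [dist_eq_norm, dist_eq_norm, e, norm_mul, Complex.norm_real, Real.norm_eq_abs,
      abs_of_pos (by linarith)] at h1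
    have : 0 < ‖z₀ - c‖ := norm_pos_iff.2 (sub_ne_zero.2 hzc)
    nlinarith

/-- two-point log kernel -/
def lm (p q z : ℂ) : ℝ := Real.log (max ‖z - p‖ ‖z - q‖)

lemma max_pos {p q : ℂ} (h : p ≠ q) (z : ℂ) : 0 < max ‖z - p‖ ‖z - q‖ := by
  by_cases hz : z = p
  · apply lt_max_of_lt_right; rw [hz]; exact norm_pos_iff.2 (sub_ne_zero.2 h)
  · exact lt_max_of_lt_left (norm_pos_iff.2 (sub_ne_zero.2 hz))

lemma lm_cont {p q : ℂ} (h : p ≠ q) : Continuous (lm p q) := by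
  unfold lm
  exact Continuous.log (by fun_prop) fun z => (max_pos h z).ne'

lemma lm_support {p q : ℂ} (h : p ≠ q) (z₀ : ℂ) : ∃ G : ℂ → ℂ,
    (∀ᶠ z in nhds z₀, DifferentiableAt ℂ G z) ∧
      (∀ᶠ z in nhds z₀, (G z).re ≤ lm p q z) ∧ (G z₀).re = lm p q z₀ := by
  obtain ⟨s, hs0, hs1, hs2⟩ : ∃ s, ‖z₀ - s‖ = max ‖z₀ - p‖ ‖z₀ - q‖ ∧ z₀ ≠ s ∧
      ∀ z, ‖z - s‖ ≤ max ‖z - p‖ ‖z - q‖ := by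
    rcases le_total ‖z₀ - p‖ ‖z₀ - q‖ with hl | hl
    · refine ⟨q, (max_eq_right hl).symm, ?_, fun z => le_max_right _ _⟩
      have := max_pos h z₀
      rw [max_eq_right hl] at this
      exact sub_ne_zero.1 (norm_pos_iff.1 this)
    · refine ⟨p, (max_eq_left hl).symm, ?_, fun z => le_max_left _ _⟩
      have := max_pos h z₀
      rw [max_eq_left hl] at this
      exact sub_ne_zero.1 (norm_pos_iff.1 this)
  have hz : z₀ - s ≠ 0 := sub_ne_zero.2 hs1
  have hc : ContinuousAt (fun z => (z - s) / (z₀ - s)) z₀ := by fun_prop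
  have hsl : ∀ᶠ z in nhds z₀, (z - s) / (z₀ - s) ∈ Complex.slitPlane := by
    apply hc.eventually
    show ∀ᶠ y in nhds ((z₀ - s) / (z₀ - s)), y ∈ Complex.slitPlane
    rw [div_self hz]
    exact Complex.isOpen_slitPlane.mem_nhds Complex.one_mem_slitPlane
  have hre : ∀ z, (z - s) / (z₀ - s) ∈ Complex.slitPlane →
      (Complex.log ((z - s) / (z₀ - s)) + (Real.log ‖z₀ - s‖ : ℂ)).re = Real.log ‖z - s‖ := by
    intro z hz'
    have hne : z - s ≠ 0 := by
      intro h0; rw [h0] at hz'; simp at hz'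
    rw [Complex.add_re, Complex.log_re, norm_div, Real.log_div (norm_ne_zero_iff.2 hne)
      (norm_ne_zero_iff.2 hz), Complex.ofReal_re]
    ring
  refine ⟨fun z => Complex.log ((z - s) / (z₀ - s)) + (Real.log ‖z₀ - s‖ : ℂ), ?_, ?_, ?_⟩
  · filter_upwards [hsl] with z hz'
    exact (DifferentiableAt.clog (f := fun z => (z - s) / (z₀ - s)) (by fun_prop) hz').add_const _
  · filter_upwards [hsl] with z hz'
    rw [hre z hz']
    have hne : z - s ≠ 0 := by
      intro h0; rw [h0] at hz'; simp at hz'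
    exact Real.log_le_log (norm_pos_iff.2 hne) (hs2 z)
  · rw [hre z₀ hsl.self_of_nhds, hs0]; rfl

/-- a decreasing limit of continuous functions locally supported from below -/
lemma subharmonic_of_seq (v : ℕ → ℂ → ℝ) (hc : ∀ n, Continuous (v n))
    (hanti : ∀ n z, v (n+1) z ≤ v n z)
    (hG : ∀ n z₀, ∃ G : ℂ → ℂ, (∀ᶠ z in nhds z₀, DifferentiableAt ℂ G z) ∧
      (∀ᶠ z in nhds z₀, (G z).re ≤ v n z) ∧ (G z₀).re = v n z₀) :
    SubharmonicFn (fun z => ⨅ n, (v n z : EReal)) := by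
  have hA : ∀ z, Antitone fun n => v n z := fun z => antitone_nat_of_succ_le fun n => hanti n z
  refine ⟨?_, ?_, ?_⟩
  · exact upperSemicontinuous_iInf fun n =>
      (continuous_coe_real_ereal.comp (hc n)).upperSemicontinuous
  · intro z h
    have : (⨅ n, (v n z : EReal)) ≤ v 0 z := iInf_le _ 0
    rw [show (⨅ n, (v n z : EReal)) = ⊤ from h, top_le_iff] at this
    exact EReal.coe_ne_top _ this
  · intro c r hr h hh hF hs z hz
    obtain ⟨F, hFd, hFe⟩ := hF
    have key : ∀ ε : ℝ, 0 < ε → (⨅ n, (v n z : EReal)) ≤ ((h z + ε : ℝ) : EReal) := by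
      intro ε hε
      have hex : ∃ n, ∀ y ∈ sphere c r, v n y ≤ h y + ε := by
        by_contra hcon
        push Not at hcon
        set K : ℕ → Set ℂ := fun n => sphere c r ∩ (fun y => v n y - h y) ⁻¹' Set.Ici ε
        have hKc : ∀ n, IsClosed (K n) := fun n =>
          ContinuousOn.preimage_isClosed_of_isClosed
            ((hc n).continuousOn.sub (hh.mono sphere_subset_closedBall)) isClosed_sphere
            isClosed_Ici
        have := IsCompact.nonempty_iInter_of_sequence_nonempty_isCompact_isClosed K
          (fun n y hy => ⟨hy.1, by
            have h1 : ε ≤ v (n+1) y - h y := hy.2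
            have h2 := hanti n y
            show ε ≤ v n y - h y
            linarith⟩)
          (fun n => by
            obtain ⟨y, hy, hy2⟩ := hcon n
            exact ⟨y, hy, by show ε ≤ v n y - h y; linarith⟩)
          ((isCompact_sphere c r).of_isClosed_subset (hKc 0) Set.inter_subset_left) hKc
        obtain ⟨y, hy⟩ := this
        rw [Set.mem_iInter] at hy
        have h1 := hs y (hy 0).1
        have h2 : ((h y + ε : ℝ) : EReal) ≤ ⨅ n, (v n y : EReal) := by
          refine le_iInf fun n => EReal.coe_le_coe_iff.2 ?_
          have h3 : ε ≤ v n y - h y := (hy n).2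
          linarith
        have := EReal.coe_le_coe_iff.1 (h2.trans h1)
        linarith
      obtain ⟨n, hn⟩ := hex
      have := max_principle c r (fun y => v n y - h y - ε)
        (((hc n).continuousOn.sub hh).sub continuousOn_const) (by
          intro z₀ hz₀
          obtain ⟨G, hGd, hGle, hGe⟩ := hG n z₀
          refine ⟨fun y => G y - F y - (ε : ℂ), ?_, ?_, ?_⟩
          · filter_upwards [hGd, isOpen_ball.mem_nhds hz₀] with y hy hyb
            exact (hy.sub (hFd.differentiableAt (isOpen_ball.mem_nhds hyb))).sub_const _
          · filter_upwards [hGle, isOpen_ball.mem_nhds hz₀] with y hy hyb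
            rw [hFe y hyb]; simp; exact hy
          · rw [hFe z₀ hz₀]; simp; exact hGe)
        (by intro y hy; have := hn y hy; linarith) z hz
      refine (iInf_le _ n).trans (EReal.coe_le_coe_iff.2 ?_)
      linarith
    refine EReal.le_of_forall_lt_iff_le.1 ?_
    intro t ht
    have := EReal.coe_lt_coe_iff.1 ht
    have := key (t - h z) (by linarith)
    simpa using this

/-- dyadic index -/
def idx (j : ℕ) (y : ℝ) : ℕ := ⌊(2:ℝ)^j * y⌋₊

/-- dyadic endpoints -/
def pt (a L : ℝ) (j i : ℕ) : ℝ := a + L * (i / 2^j)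

lemma pt_even (a L : ℝ) (j i : ℕ) : pt a L (j+1) (2*i) = pt a L j i := by
  unfold pt; push_cast; rw [pow_succ]; field_simp

lemma idx_half (j : ℕ) (y : ℝ) : idx (j+1) y / 2 = idx j y := by
  unfold idx
  rw [← Nat.floor_div_ofNat]
  congr 1
  rw [pow_succ]; ring

/-- the approximating potentials -/
def vn (a L : ℝ) (θ : ℕ → ℕ → ℝ) (n : ℕ) (z : ℂ) : ℝ :=
  ∑ i ∈ Finset.range (2^n), θ n i * lm (pt a L n i : ℂ) (pt a L n (i+1) : ℂ) z

lemma pt_ne {a L : ℝ} (hL : 0 < L) (j i : ℕ) : (pt a L j i : ℂ) ≠ (pt a L j (i+1) : ℂ) := by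
  intro h
  have h := Complex.ofReal_inj.1 h
  unfold pt at h
  have : L * ((i:ℝ) / 2^j) = L * (((i+1:ℕ):ℝ) / 2^j) := by linarith
  have := mul_left_cancel₀ hL.ne' this
  rw [div_left_inj' (by positivity)] at this
  push_cast at this; linarith

lemma sum_two_mul (f : ℕ → ℝ) (N : ℕ) :
    ∑ i ∈ Finset.range (2 * N), f i = ∑ i ∈ Finset.range N, (f (2*i) + f (2*i+1)) := by
  induction N with
  | zero => simp
  | succ N ih =>
    rw [Finset.sum_range_succ, ← ih, show 2 * (N+1) = 2*N+1+1 by ring, Finset.sum_range_succ,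
      Finset.sum_range_succ]; ring

lemma vn_anti {a L : ℝ} (hL : 0 < L) (θ : ℕ → ℕ → ℝ) (h0 : ∀ j i, 0 ≤ θ j i)
    (hadd : ∀ j i, θ (j+1) (2*i) + θ (j+1) (2*i+1) = θ j i) (n : ℕ) (z : ℂ) :
    vn a L θ (n+1) z ≤ vn a L θ n z := by
  unfold vn
  rw [pow_succ, mul_comm, sum_two_mul]
  apply Finset.sum_le_sum
  intro i _
  rw [← hadd n i, add_mul]
  have hp : pt a L (n+1) (2*i+1+1) = pt a L n (i+1) := by
    rw [← pt_even a L n]; rfl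
  have hmid : (pt a L (n+1) (2*i+1) : ℂ) = ((pt a L n i : ℂ) + (pt a L n (i+1) : ℂ)) / 2 := by
    unfold pt; push_cast; rw [pow_succ]; field_simp; ring
  have hz : ‖z - (pt a L (n+1) (2*i+1) : ℂ)‖ ≤
      max ‖z - (pt a L n i : ℂ)‖ ‖z - (pt a L n (i+1) : ℂ)‖ := by
    rw [hmid]
    have e : z - ((pt a L n i : ℂ) + (pt a L n (i+1) : ℂ)) / 2 =
      ((z - (pt a L n i : ℂ)) + (z - (pt a L n (i+1) : ℂ))) / 2 := by ring
    rw [e, norm_div]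
    have := norm_add_le (z - (pt a L n i : ℂ)) (z - (pt a L n (i+1) : ℂ))
    have := le_max_left ‖z - (pt a L n i : ℂ)‖ ‖z - (pt a L n (i+1) : ℂ)‖
    have := le_max_right ‖z - (pt a L n i : ℂ)‖ ‖z - (pt a L n (i+1) : ℂ)‖
    rw [Complex.norm_ofNat, div_le_iff₀ (by norm_num)]
    linarith
  apply add_le_add
  · refine mul_le_mul_of_nonneg_left ?_ (h0 _ _)
    unfold lm
    apply Real.log_le_log (max_pos (pt_ne hL _ _) z)
    rw [pt_even]
    exact max_le (le_max_left _ _) hz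
  · refine mul_le_mul_of_nonneg_left ?_ (h0 _ _)
    unfold lm
    apply Real.log_le_log (max_pos (pt_ne hL _ _) z)
    rw [hp]
    exact max_le hz (le_max_right _ _)

lemma vn_support {a L : ℝ} (hL : 0 < L) (θ : ℕ → ℕ → ℝ) (h0 : ∀ j i, 0 ≤ θ j i) (n : ℕ) (z₀ : ℂ) :
    ∃ G : ℂ → ℂ, (∀ᶠ z in nhds z₀, DifferentiableAt ℂ G z) ∧
      (∀ᶠ z in nhds z₀, (G z).re ≤ vn a L θ n z) ∧ (G z₀).re = vn a L θ n z₀ := by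
  choose G h1 h2 h3 using fun i => lm_support (pt_ne hL n i : (pt a L n i : ℂ) ≠ _) z₀
  refine ⟨fun z => ∑ i ∈ Finset.range (2^n), (θ n i : ℂ) * G i z, ?_, ?_, ?_⟩
  · have : ∀ᶠ z in nhds z₀, ∀ i ∈ Finset.range (2^n), DifferentiableAt ℂ (G i) z :=
      (Filter.eventually_all_finset _).2 fun i _ => h1 i
    filter_upwards [this] with z hz
    exact DifferentiableAt.fun_sum fun i hi => (hz i hi).const_mul _
  · have : ∀ᶠ z in nhds z₀, ∀ i ∈ Finset.range (2^n), (G i z).re ≤ lm _ _ z :=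
      (Filter.eventually_all_finset _).2 fun i _ => h2 i
    filter_upwards [this] with z hz
    rw [Complex.re_sum]
    unfold vn
    apply Finset.sum_le_sum
    intro i hi
    rw [Complex.re_ofReal_mul]
    exact mul_le_mul_of_nonneg_left (hz i hi) (h0 _ _)
  · rw [Complex.re_sum]
    unfold vn
    apply Finset.sum_congr rfl
    intro i hi
    rw [Complex.re_ofReal_mul, h3]

/-- upper bound at points of the segment, subtree version -/
lemma subtree_sum (θ : ℕ → ℕ → ℝ)
    (hadd : ∀ j i, θ (j+1) (2*i) + θ (j+1) (2*i+1) = θ j i) (j d i : ℕ) :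
    ∑ r ∈ Finset.range (2^d), θ (j+d) (2^d*i+r) = θ j i := by
  induction d with
  | zero => simp
  | succ d ih =>
    rw [pow_succ, mul_comm (2^d) 2, sum_two_mul, ← ih]
    apply Finset.sum_congr rfl
    intro r _
    rw [← hadd (j+d)]
    rw [show 2 * 2^d*i + 2*r = 2*(2^d*i+r) by ring, show 2 * 2^d*i + (2*r+1) = 2*(2^d*i+r)+1 by ring]
    rfl

lemma count_sum (θ : ℕ → ℕ → ℝ)
    (hadd : ∀ j i, θ (j+1) (2*i) + θ (j+1) (2*i+1) = θ j i) (n j k : ℕ) (hj : j ≤ n)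
    (hk : k < 2^j) :
    ∑ i ∈ Finset.range (2^n), (if i / 2^(n-j) = k then θ n i else 0) = θ j k := by
  obtain ⟨d, rfl⟩ := Nat.exists_eq_add_of_le hj
  rw [← subtree_sum θ hadd j d k, ← Finset.sum_filter]
  simp only [Nat.add_sub_cancel_left]
  symm
  apply Finset.sum_nbij (fun r => 2^d*k + r)
  · intro r hr
    simp only [Finset.mem_range, Finset.mem_filter] at hr ⊢
    constructor
    · calc 2^d*k + r < 2^d*k+2^d := by omega
        _ = 2^d*(k+1) := by ring
        _ ≤ 2^d*2^j := Nat.mul_le_mul_left _ hk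
        _ = 2^(j+d) := by rw [pow_add]; ring
    · rw [Nat.mul_add_div (by positivity), Nat.div_eq_of_lt hr, add_zero]
  · intro r _ s _ h; simpa using h
  · intro i hi
    simp only [Finset.coe_filter, Finset.mem_range, Set.mem_ofPred_eq] at hi
    refine ⟨i % 2^d, by simp [Nat.mod_lt], ?_⟩
    rw [← hi.2]; exact Nat.div_add_mod i (2^d)
  · intro r _; rfl

lemma idx_lt {y : ℝ} (hy0 : 0 ≤ y) (hy1 : y < 1) (j : ℕ) : idx j y < 2^j := by
  unfold idx
  rw [Nat.floor_lt (by positivity)]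
  push_cast
  have : (0:ℝ) < 2^j := by positivity
  nlinarith

lemma lm_le {a L : ℝ} (hL : 0 < L) (n i j : ℕ) (y : ℝ) (hy0 : 0 ≤ y) (hj : j ≤ n)
    (h : i / 2^(n-j) = idx j y) :
    lm (pt a L n i : ℂ) (pt a L n (i+1) : ℂ) ((a + L * y : ℝ) : ℂ) ≤
      Real.log L - j * Real.log 2 := by
  obtain ⟨d, rfl⟩ := Nat.exists_eq_add_of_le hj
  rw [Nat.add_sub_cancel_left] at h
  have e : Real.log L - j * Real.log 2 = Real.log (L / 2^j) := by
    rw [Real.log_div hL.ne' (by positivity), Real.log_pow]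
  rw [e]
  apply Real.log_le_log (max_pos (pt_ne hL _ _) _)
  set k := idx j y with hk
  have h1 : k * 2^d ≤ i := by rw [← h]; exact Nat.div_mul_le_self i (2^d)
  have h2 : i + 1 ≤ (k + 1) * 2^d := by
    rw [← h]; exact Nat.succ_le_of_lt (Nat.lt_mul_of_div_lt (Nat.lt_succ_self _) (by positivity))
  have h3 : (k : ℝ) ≤ 2^j * y := Nat.floor_le (by positivity)
  have h4 : 2^j * y < k + 1 := Nat.lt_floor_add_one _
  have h1' : (k : ℝ) * 2^d ≤ i := by exact_mod_cast h1
  have h2' : (i : ℝ) + 1 ≤ (k + 1) * 2^d := by exact_mod_cast h2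
  have key : ∀ t : ℝ, (k : ℝ) * 2^d ≤ t → t ≤ (k + 1) * 2^d →
      |L * y - L * (t / 2^(j+d))| ≤ L / 2^j := by
    intro t ht1 ht2
    rw [← mul_sub, abs_mul, abs_of_pos hL, div_eq_mul_one_div L]
    refine mul_le_mul_of_nonneg_left ?_ hL.le
    have p1 : (0:ℝ) < 2^j := by positivity
    have p2 : (0:ℝ) < 2^d := by positivity
    have q1 : (k : ℝ) / 2^j ≤ t / 2^(j+d) := by
      rw [div_le_div_iff₀ p1 (by positivity), pow_add]; nlinarith
    have q2 : t / 2^(j+d) ≤ (k + 1) / 2^j := by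
      rw [div_le_div_iff₀ (by positivity) p1, pow_add]; nlinarith
    have q3 : (k : ℝ) / 2^j ≤ y := by rw [div_le_iff₀ p1]; linarith
    have q4 : y ≤ (k + 1) / 2^j := by rw [le_div_iff₀ p1]; linarith
    rw [add_div] at q2 q4
    rw [abs_le]; constructor <;> linarith
  have conv : ∀ m : ℕ, ‖((a + L * y : ℝ) : ℂ) - (pt a L (j+d) m : ℂ)‖ =
      |L * y - L * ((m:ℝ) / 2^(j+d))| := by
    intro m
    rw [← Complex.ofReal_sub, Complex.norm_real, Real.norm_eq_abs]
    unfold pt; congr 1; ring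
  rw [conv, conv]
  apply max_le
  · exact key i h1' (by linarith)
  · exact key _ (by push_cast; linarith) (by push_cast; linarith)

lemma vn_le {a L : ℝ} (hL : 0 < L) (θ : ℕ → ℕ → ℝ) (h0 : ∀ j i, 0 ≤ θ j i)
    (hadd : ∀ j i, θ (j+1) (2*i) + θ (j+1) (2*i+1) = θ j i) (n : ℕ) (y : ℝ)
    (hy0 : 0 ≤ y) (hy1 : y < 1) :
    vn a L θ n ((a + L * y : ℝ) : ℂ) ≤ (Real.log L + Real.log 2) * θ 0 0 -
      Real.log 2 * ∑ j ∈ Finset.range (n+1), θ j (idx j y) := by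
  have hl2 : 0 < Real.log 2 := Real.log_pos (by norm_num)
  have hk : ∀ i ∈ Finset.range (2^n),
      lm (pt a L n i : ℂ) (pt a L n (i+1) : ℂ) ((a + L * y : ℝ) : ℂ) ≤
      (Real.log L + Real.log 2) - Real.log 2 * ∑ j ∈ Finset.range (n+1),
        (if i / 2^(n-j) = idx j y then (1:ℝ) else 0) := by
    intro i hi
    rw [← Finset.sum_filter, Finset.sum_const, nsmul_eq_mul, mul_one]
    set F := (Finset.range (n+1)).filter (fun j => i / 2^(n-j) = idx j y) with hF
    have hne : F.Nonempty := by
      refine ⟨0, ?_⟩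
      have h1 := idx_lt hy0 hy1 0
      simp only [hF, Finset.mem_filter, Finset.mem_range]
      refine ⟨by omega, ?_⟩
      rw [Nat.sub_zero, Nat.div_eq_of_lt (Finset.mem_range.1 hi)]
      simp at h1; exact h1.symm
    set J := F.max' hne with hJ
    have hJF : J ∈ F := F.max'_mem hne
    have hcard : F.card ≤ J + 1 := by
      rw [← Finset.card_range (J+1)]
      apply Finset.card_le_card
      intro j hj
      rw [Finset.mem_range]
      have := F.le_max' j hj
      omega
    have hcard' : (F.card : ℝ) ≤ J + 1 := by exact_mod_cast hcard
    have := lm_le (a := a) hL n i J y hy0 (by simp [hF] at hJF; omega) (by simp [hF] at hJF; exact hJF.2)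
    nlinarith
  have hroot : ∑ i ∈ Finset.range (2^n), θ n i = θ 0 0 := by
    have := subtree_sum θ hadd 0 n 0
    simpa using this
  calc vn a L θ n ((a + L * y : ℝ) : ℂ)
      ≤ ∑ i ∈ Finset.range (2^n), θ n i * ((Real.log L + Real.log 2) -
        Real.log 2 * ∑ j ∈ Finset.range (n+1), (if i / 2^(n-j) = idx j y then (1:ℝ) else 0)) :=
        Finset.sum_le_sum fun i hi => mul_le_mul_of_nonneg_left (hk i hi) (h0 _ _)
    _ = (Real.log L + Real.log 2) * ∑ i ∈ Finset.range (2^n), θ n i - Real.log 2 *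
        ∑ j ∈ Finset.range (n+1), ∑ i ∈ Finset.range (2^n),
          (if i / 2^(n-j) = idx j y then θ n i else 0) := by
        rw [Finset.sum_comm, Finset.mul_sum, Finset.mul_sum, ← Finset.sum_sub_distrib]
        apply Finset.sum_congr rfl
        intro i _
        rw [mul_sub, mul_left_comm (θ n i), Finset.mul_sum (a := θ n i)]
        simp only [mul_ite, mul_one, mul_zero]
        ring
    _ = _ := by
        rw [hroot]
        congr 2
        apply Finset.sum_congr rfl
        intro j hj
        exact count_sum θ hadd n j _ (by simp at hj; omega) (idx_lt hy0 hy1 j)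

lemma polar_of_flow {a L : ℝ} (hL : 0 < L) (θ : ℕ → ℕ → ℝ) (h0 : ∀ j i, 0 ≤ θ j i)
    (hadd : ∀ j i, θ (j+1) (2*i) + θ (j+1) (2*i+1) = θ j i) (S : Set ℂ)
    (hS : ∀ z ∈ S, ∃ y : ℝ, 0 ≤ y ∧ y < 1 ∧ z = ((a + L * y : ℝ) : ℂ) ∧
      ∀ T : ℝ, ∃ n, T ≤ ∑ j ∈ Finset.range n, θ j (idx j y)) : PolarSet S := by
  refine ⟨fun z => ⨅ n, (vn a L θ n z : EReal), subharmonic_of_seq _ ?_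
    (vn_anti hL θ h0 hadd) (vn_support hL θ h0), ⟨((a + L + 1 : ℝ) : ℂ), ?_⟩, ?_⟩
  · intro n
    exact continuous_finsetSum _ fun i _ => (lm_cont (pt_ne hL n i)).const_mul _
  · have : (0 : EReal) ≤ ⨅ n, (vn a L θ n ((a + L + 1 : ℝ) : ℂ) : EReal) := by
      refine le_iInf fun n => ?_
      rw [← EReal.coe_zero, EReal.coe_le_coe_iff]
      apply Finset.sum_nonneg
      intro i hi
      refine mul_nonneg (h0 _ _) (Real.log_nonneg (le_max_of_le_left ?_))
      rw [← Complex.ofReal_sub, Complex.norm_real, Real.norm_eq_abs]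
      refine le_trans ?_ (le_abs_self _)
      unfold pt
      have h1 : (i : ℝ) / 2^n ≤ 1 := by
        rw [div_le_one (by positivity)]
        have := Finset.mem_range.1 hi
        exact_mod_cast this.le
      nlinarith
    intro h
    rw [show (⨅ n, (vn a L θ n ((a + L + 1 : ℝ) : ℂ) : EReal)) = ⊥ from h] at this
    simp at this
  · intro z hz
    obtain ⟨y, hy0, hy1, rfl, hT⟩ := hS z hz
    rw [EReal.eq_bot_iff_forall_lt]
    intro T
    have hl2 : 0 < Real.log 2 := Real.log_pos (by norm_num)
    obtain ⟨n, hn⟩ := hT (((Real.log L + Real.log 2) * θ 0 0 - T + 1) / Real.log 2)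
    rw [div_le_iff₀ hl2] at hn
    refine (iInf_le _ n).trans_lt (EReal.coe_lt_coe_iff.2 ?_)
    have h1 := vn_le (a := a) hL θ h0 hadd n y hy0 hy1
    rw [Finset.sum_range_succ] at h1
    have := h0 n (idx n y)
    nlinarith

end PolarAux
namespace TreeCap

/-- the series/parallel combination function -/
def phi (s : ℝ) : ℝ := s / (1 + s)

lemma phi_nonneg {s : ℝ} (h : 0 ≤ s) : 0 ≤ phi s := by unfold phi; positivity

lemma phi_le_half {s : ℝ} (h : 0 ≤ s) (h1 : s ≤ 1) : phi s ≤ 1 / 2 := by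
  unfold phi; rw [div_le_div_iff₀ (by linarith) (by norm_num)]; linarith

lemma phi_mono {s t : ℝ} (h : 0 ≤ s) (h1 : s ≤ t) : phi s ≤ phi t := by
  unfold phi; rw [div_le_div_iff₀ (by linarith) (by linarith)]; nlinarith

lemma phi_ssa {u i e f : ℝ} (hi : 0 ≤ i) (hie : i ≤ e) (hif : i ≤ f) (heu : e ≤ u) (hfu : f ≤ u)
    (h : u + i ≤ e + f) : phi u + phi i ≤ phi e + phi f := by
  have h1 : phi u ≤ phi (e + f - i) := phi_mono (by linarith) (by linarith)
  have h2 : phi (e + f - i) + phi i ≤ phi e + phi f := by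
    obtain ⟨p, rfl⟩ : ∃ p, e = i + p := ⟨e - i, by ring⟩
    obtain ⟨q, rfl⟩ : ∃ q, f = i + q := ⟨f - i, by ring⟩
    have hp : 0 ≤ p := by linarith
    have hq : 0 ≤ q := by linarith
    have e1 : i + p + (i + q) - i = i + p + q := by ring
    rw [e1]
    unfold phi
    have k1 : ∀ s : ℝ, 0 ≤ s → s / (1 + s) = 1 - 1 / (1 + s) := by
      intro s hs; field_simp; ring
    rw [k1 _ (by positivity), k1 _ hi, k1 (i+p) (by positivity), k1 (i+q) (by positivity)]
    have : 1 / (1 + (i + p)) + 1 / (1 + (i + q)) ≤ 1 / (1 + (i + p + q)) + 1 / (1 + i) := by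
      rw [div_add_div _ _ (by positivity) (by positivity),
        div_add_div _ _ (by positivity) (by positivity),
        div_le_div_iff₀ (by positivity) (by positivity)]
      have : 0 ≤ p * q := by positivity
      have : 0 ≤ p * q * i := by positivity
      have : 0 ≤ p * q * p := by positivity
      have : 0 ≤ p * q * q := by positivity
      nlinarith
    linarith
  linarith

variable {X : Type*}

open Classical in
/-- finite depth tree capacity -/
def cap (idx : ℕ → X → ℕ) (E : Set X) : ℕ → ℕ → ℕ → ℝ
  | 0, j, i => if ∃ x ∈ E, idx j x = i then 1 / 2 else 0
  | (d+1), j, i => phi (cap idx E d (j+1) (2*i) + cap idx E d (j+1) (2*i+1))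

lemma cap_bounds (idx : ℕ → X → ℕ) (E : Set X) (d j i : ℕ) :
    0 ≤ cap idx E d j i ∧ cap idx E d j i ≤ 1 / 2 := by
  induction d generalizing j i with
  | zero => simp only [cap]; split_ifs <;> norm_num
  | succ d ih =>
    simp only [cap]
    have h1 := ih (j+1) (2*i)
    have h2 := ih (j+1) (2*i+1)
    exact ⟨phi_nonneg (by linarith), phi_le_half (by linarith) (by linarith)⟩

lemma cap_mono (idx : ℕ → X → ℕ) {E F : Set X} (h : E ⊆ F) (d j i : ℕ) :
    cap idx E d j i ≤ cap idx F d j i := by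
  induction d generalizing j i with
  | zero =>
    simp only [cap]; split_ifs with h1 h2 <;> norm_num
    obtain ⟨x, hx, hxi⟩ := h1
    exact h2 ⟨x, h hx, hxi⟩
  | succ d ih =>
    simp only [cap]
    exact phi_mono (add_nonneg (cap_bounds _ _ _ _ _).1 (cap_bounds _ _ _ _ _).1)
      (add_le_add (ih _ _) (ih _ _))

lemma cap_ssa (idx : ℕ → X → ℕ) (E F : Set X) (d j i : ℕ) :
    cap idx (E ∪ F) d j i + cap idx (E ∩ F) d j i ≤ cap idx E d j i + cap idx F d j i := by
  induction d generalizing j i with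
  | zero =>
    have a1 := cap_mono idx (Set.inter_subset_left : E ∩ F ⊆ E) 0 j i
    have a2 := cap_mono idx (Set.inter_subset_right : E ∩ F ⊆ F) 0 j i
    have b1 : cap idx (E ∪ F) 0 j i ≤ max (cap idx E 0 j i) (cap idx F 0 j i) := by
      simp only [cap]
      by_cases h : ∃ x ∈ E ∪ F, idx j x = i
      · rw [if_pos h]
        obtain ⟨x, hx | hx, hxi⟩ := h
        · exact le_max_of_le_left (by rw [if_pos ⟨x, hx, hxi⟩])
        · exact le_max_of_le_right (by rw [if_pos ⟨x, hx, hxi⟩])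
      · rw [if_neg h]; apply le_max_of_le_left; split_ifs <;> norm_num
    rcases le_max_iff.1 b1 with h | h <;> linarith
  | succ d ih =>
    simp only [cap]
    have B := fun E j i => (cap_bounds idx E d j i).1
    have m1 := fun j i => cap_mono idx (Set.inter_subset_left : E ∩ F ⊆ E) d j i
    have m2 := fun j i => cap_mono idx (Set.inter_subset_right : E ∩ F ⊆ F) d j i
    have m3 := fun j i => cap_mono idx (Set.subset_union_left : E ⊆ E ∪ F) d j i
    have m4 := fun j i => cap_mono idx (Set.subset_union_right : F ⊆ E ∪ F) d j i
    apply phi_ssa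
    · exact add_nonneg (B _ _ _) (B _ _ _)
    · exact add_le_add (m1 _ _) (m1 _ _)
    · exact add_le_add (m2 _ _) (m2 _ _)
    · exact add_le_add (m3 _ _) (m3 _ _)
    · exact add_le_add (m4 _ _) (m4 _ _)
    · linarith [ih (j+1) (2*i), ih (j+1) (2*i+1)]

/-- structure of dyadic indices -/
structure Good (idx : ℕ → X → ℕ) : Prop where
  h0 : ∀ x, idx 0 x = 0
  h2 : ∀ j x, idx (j+1) x / 2 = idx j x
  h3 : ∀ j x l, l / 2 = idx j x → ∃ x', idx (j+1) x' = l

lemma cap_anti {idx : ℕ → X → ℕ} (G : Good idx) (E : Set X) (j i : ℕ) :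
    Antitone (fun d => cap idx E d j i) := by
  apply antitone_nat_of_succ_le
  intro d
  induction d generalizing j i with
  | zero =>
    by_cases h : ∃ x ∈ E, idx j x = i
    · have : cap idx E 0 j i = 1 / 2 := by simp only [cap]; rw [if_pos h]
      rw [this]; exact (cap_bounds _ _ _ _ _).2
    · have h1 : ¬ ∃ x ∈ E, idx (j+1) x = 2 * i := by
        rintro ⟨x, hx, hxi⟩
        exact h ⟨x, hx, by rw [← G.h2, hxi]; omega⟩
      have h2 : ¬ ∃ x ∈ E, idx (j+1) x = 2 * i + 1 := by
        rintro ⟨x, hx, hxi⟩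
        exact h ⟨x, hx, by rw [← G.h2, hxi]; omega⟩
      simp only [cap]; rw [if_neg h, if_neg h1, if_neg h2]; simp [phi]
  | succ d ih =>
    rw [cap, cap.eq_2 idx E j i d]
    exact phi_mono (add_nonneg (cap_bounds _ _ _ _ _).1 (cap_bounds _ _ _ _ _).1)
      (add_le_add (ih _ _) (ih _ _))

lemma cap_full {idx : ℕ → X → ℕ} (G : Good idx) (E : Set X) (d j i : ℕ)
    (hne : ∃ x, idx j x = i) (h : ∀ x, idx j x = i → x ∈ E) : cap idx E d j i = 1 / 2 := by
  induction d generalizing j i with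
  | zero =>
    obtain ⟨x, hx⟩ := hne
    simp only [cap]; rw [if_pos ⟨x, h x hx, hx⟩]
  | succ d ih =>
    obtain ⟨x, hx⟩ := hne
    rw [cap, ih, ih]
    · norm_num [phi]
    · exact G.h3 j x _ (by omega)
    · intro y hy; apply h; rw [← G.h2, hy]; omega
    · exact G.h3 j x _ (by omega)
    · intro y hy; apply h; rw [← G.h2, hy]; omega

/-- limiting capacity -/
def Cap (idx : ℕ → X → ℕ) (E : Set X) (j i : ℕ) : ℝ := ⨅ d, cap idx E d j i

lemma Cap_bdd (idx : ℕ → X → ℕ) (E : Set X) (j i : ℕ) :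
    BddBelow (Set.range fun d => cap idx E d j i) :=
  ⟨0, by rintro _ ⟨d, rfl⟩; exact (cap_bounds _ _ _ _ _).1⟩

lemma Cap_tendsto {idx : ℕ → X → ℕ} (G : Good idx) (E : Set X) (j i : ℕ) :
    Tendsto (fun d => cap idx E d j i) atTop (nhds (Cap idx E j i)) :=
  tendsto_atTop_ciInf (cap_anti G E j i) (Cap_bdd _ _ _ _)

lemma Cap_le (idx : ℕ → X → ℕ) (E : Set X) (d j i : ℕ) : Cap idx E j i ≤ cap idx E d j i :=
  ciInf_le (Cap_bdd _ _ _ _) d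

lemma Cap_bounds (idx : ℕ → X → ℕ) (E : Set X) (j i : ℕ) :
    0 ≤ Cap idx E j i ∧ Cap idx E j i ≤ 1 / 2 :=
  ⟨le_ciInf fun d => (cap_bounds _ _ _ _ _).1, (Cap_le idx E 0 j i).trans (cap_bounds _ _ _ _ _).2⟩

lemma Cap_mono (idx : ℕ → X → ℕ) {E F : Set X} (h : E ⊆ F) (j i : ℕ) :
    Cap idx E j i ≤ Cap idx F j i :=
  ciInf_mono (Cap_bdd _ _ _ _) fun d => cap_mono idx h d j i

lemma Cap_ssa {idx : ℕ → X → ℕ} (G : Good idx) (E F : Set X) (j i : ℕ) :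
    Cap idx (E ∪ F) j i + Cap idx (E ∩ F) j i ≤ Cap idx E j i + Cap idx F j i :=
  le_of_tendsto_of_tendsto' ((Cap_tendsto G _ j i).add (Cap_tendsto G _ j i))
    ((Cap_tendsto G _ j i).add (Cap_tendsto G _ j i)) fun d => cap_ssa idx E F d j i

lemma phi_tendsto {ι : Type*} {l : Filter ι} {f : ι → ℝ} {s : ℝ} (hs : 0 ≤ s)
    (h : Tendsto f l (nhds s)) : Tendsto (fun d => phi (f d)) l (nhds (phi s)) :=
  h.div (tendsto_const_nhds.add h) (by positivity)

lemma Cap_rec {idx : ℕ → X → ℕ} (G : Good idx) (E : Set X) (j i : ℕ) :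
    Cap idx E j i = phi (Cap idx E (j+1) (2*i) + Cap idx E (j+1) (2*i+1)) := by
  have h1 := (tendsto_add_atTop_iff_nat 1).2 (Cap_tendsto G E j i)
  have h2 := phi_tendsto (add_nonneg (Cap_bounds idx E (j+1) (2*i)).1
    (Cap_bounds idx E (j+1) (2*i+1)).1)
    ((Cap_tendsto G E (j+1) (2*i)).add (Cap_tendsto G E (j+1) (2*i+1)))
  exact tendsto_nhds_unique h1 h2

lemma Cap_full {idx : ℕ → X → ℕ} (G : Good idx) (E : Set X) (j i : ℕ)
    (hne : ∃ x, idx j x = i) (h : ∀ x, idx j x = i → x ∈ E) : Cap idx E j i = 1 / 2 := by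
  unfold Cap
  simp [cap_full G E _ j i hne h]

/-- energy of subtree -/
def En (g : ℕ → ℕ → ℝ) : ℕ → ℕ → ℕ → ℝ
  | 0, j, i => g j i ^ 2
  | (d+1), j, i => g j i ^ 2 + (En g d (j+1) (2*i) + En g d (j+1) (2*i+1))

lemma En_nonneg (g : ℕ → ℕ → ℝ) (d j i : ℕ) : 0 ≤ En g d j i := by
  induction d generalizing j i with
  | zero => simp only [En]; positivity
  | succ d ih => simp only [En]; have := ih (j+1) (2*i); have := ih (j+1) (2*i+1); positivity

lemma En_eq (g : ℕ → ℕ → ℝ) (d j i : ℕ) :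
    En g d j i = ∑ l ∈ Finset.range (d+1), ∑ r ∈ Finset.range (2^l), g (j+l) (2^l*i+r) ^ 2 := by
  induction d generalizing j i with
  | zero => simp [En]
  | succ d ih =>
    rw [En, ih, ih, Finset.sum_range_succ' _ (d+1), ← Finset.sum_add_distrib, add_comm]
    congr 1
    · apply Finset.sum_congr rfl
      intro l _
      have : 2^(l+1) = 2^l + 2^l := by ring
      rw [this, Finset.sum_range_add]
      congr 1
      · apply Finset.sum_congr rfl; intro r _
        rw [show j + 1 + l = j + (l+1) by ring, show 2^l*(2*i)+r = (2^l+2^l)*i+r by ring]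
      · apply Finset.sum_congr rfl; intro r _
        rw [show j + 1 + l = j + (l+1) by ring,
          show 2^l*(2*i+1)+r = (2^l+2^l)*i+(2^l+r) by ring]
    · simp

lemma dirichlet {idx : ℕ → X → ℕ} (G : Good idx) (g : ℕ → ℕ → ℝ) (hg : ∀ j i, 0 ≤ g j i)
    (E : Set X) (d j i : ℕ) (lam : ℝ) (hlam : 0 ≤ lam)
    (h : ∀ x ∈ E, idx j x = i → lam ≤ ∑ l ∈ Finset.range (d+1), g (j+l) (idx (j+l) x)) :
    lam ^ 2 * cap idx E d j i ≤ En g d j i := by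
  induction d generalizing j i lam with
  | zero =>
    simp only [cap, En]
    split_ifs with hm
    · obtain ⟨x, hx, hxi⟩ := hm
      have := h x hx hxi
      simp only [zero_add, Finset.range_one, Finset.sum_singleton, add_zero, hxi] at this
      nlinarith
    · simp; positivity
  | succ d ih =>
    by_cases ha : lam ≤ g j i
    · have h1 := cap_bounds idx E (d+1) j i
      have h2 : g j i ^ 2 ≤ En g (d+1) j i := by
        rw [En]; linarith [En_nonneg g d (j+1) (2*i), En_nonneg g d (j+1) (2*i+1)]
      have h3 : lam ^ 2 ≤ g j i ^ 2 := by gcongr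
      nlinarith [sq_nonneg lam]
    · push Not at ha
      have key : ∀ i', i' / 2 = i → ∀ x ∈ E, idx (j+1) x = i' →
          lam - g j i ≤ ∑ l ∈ Finset.range (d+1), g (j+1+l) (idx (j+1+l) x) := by
        intro i' hi' x hx hxi
        have hji : idx j x = i := by rw [← G.h2, hxi, hi']
        have := h x hx hji
        rw [Finset.sum_range_succ'] at this
        simp only [add_zero, hji] at this
        have e : ∑ l ∈ Finset.range (d+1), g (j+1+l) (idx (j+1+l) x) =
          ∑ l ∈ Finset.range (d+1), g (j+(l+1)) (idx (j+(l+1)) x) := by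
          apply Finset.sum_congr rfl; intro l _; rw [show j + 1 + l = j + (l+1) by ring]
        rw [e]; linarith
      have h1 := ih (j+1) (2*i) (lam - g j i) (by linarith) (key _ (by omega))
      have h2 := ih (j+1) (2*i+1) (lam - g j i) (by linarith) (key _ (by omega))
      rw [cap, En]
      have b1 := (cap_bounds idx E d (j+1) (2*i)).1
      have b2 := (cap_bounds idx E d (j+1) (2*i+1)).1
      set s := cap idx E d (j+1) (2*i) + cap idx E d (j+1) (2*i+1) with hs
      have hs0 : 0 ≤ s := by positivity
      have h3 : (lam - g j i)^2 * s ≤ En g d (j+1) (2*i) + En g d (j+1) (2*i+1) := by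
        rw [hs]; linarith
      have h4 : lam ^ 2 * phi s ≤ g j i ^ 2 + (lam - g j i)^2 * s := by
        unfold phi
        rw [mul_div_assoc', div_le_iff₀ (by positivity)]
        nlinarith [sq_nonneg (g j i - (lam - g j i) * s)]
      linarith

/-- the set where the sum of g along the branch is at least one -/
def DSet (idx : ℕ → X → ℕ) (g : ℕ → ℕ → ℝ) (m : ℕ) : Set X :=
  {x | 1 ≤ ∑ j ∈ Finset.range (m+1), g j (idx j x)}

lemma Cap_DSet {idx : ℕ → X → ℕ} (G : Good idx) (g : ℕ → ℕ → ℝ) (hg : ∀ j i, 0 ≤ g j i) (m : ℕ) :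
    Cap idx (DSet idx g m) 0 0 ≤ En g m 0 0 := by
  have := dirichlet G g hg (DSet idx g m) m 0 0 1 (by norm_num) (by
    intro x hx _; simpa [DSet] using hx)
  have := Cap_le idx (DSet idx g m) m 0 0
  linarith

/-- finite level sets -/
def Lev (idx : ℕ → X → ℕ) (E : Set X) : Prop :=
  ∃ m, ∀ j, m ≤ j → ∀ x x', idx j x = idx j x' → x ∈ E → x' ∈ E

lemma idx_anc {idx : ℕ → X → ℕ} (G : Good idx) {j k : ℕ} (h : j ≤ k) {x x' : X}
    (e : idx k x = idx k x') : idx j x = idx j x' := by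
  induction k, h using Nat.le_induction with
  | base => exact e
  | succ k _ ih => apply ih; rw [← G.h2 k x, ← G.h2 k x', e]

lemma Lev_DSet {idx : ℕ → X → ℕ} (G : Good idx) (g : ℕ → ℕ → ℝ) (m : ℕ) :
    Lev idx (DSet idx g m) := by
  refine ⟨m, fun j hj x x' e hx => ?_⟩
  simp only [DSet, Set.mem_ofPred_eq] at hx ⊢
  refine hx.trans_eq (Finset.sum_congr rfl fun l hl => ?_)
  rw [idx_anc G (by simp at hl; omega) e]

lemma Lev.union {idx : ℕ → X → ℕ} {E F : Set X} (hE : Lev idx E) (hF : Lev idx F) :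
    Lev idx (E ∪ F) := by
  obtain ⟨m, hm⟩ := hE
  obtain ⟨n, hn⟩ := hF
  refine ⟨max m n, fun j hj x x' e hx => ?_⟩
  rcases hx with hx | hx
  · exact Or.inl (hm j (le_of_max_le_left hj) x x' e hx)
  · exact Or.inr (hn j (le_of_max_le_right hj) x x' e hx)

lemma Lev.inter {idx : ℕ → X → ℕ} {E F : Set X} (hE : Lev idx E) (hF : Lev idx F) :
    Lev idx (E ∩ F) := by
  obtain ⟨m, hm⟩ := hE
  obtain ⟨n, hn⟩ := hF
  exact ⟨max m n, fun j hj x xx e hx => ⟨hm j (le_of_max_le_left hj) x xx e hx.1,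
    hn j (le_of_max_le_right hj) x xx e hx.2⟩⟩

/-- intersection of `D N, ..., D (N+n)` -/
def IntD (D : ℕ → Set X) (N n : ℕ) : Set X := {x | ∀ k, N ≤ k → k ≤ N + n → x ∈ D k}

lemma Lev_IntD {idx : ℕ → X → ℕ} {D : ℕ → Set X} (hD : ∀ k, Lev idx (D k)) (N n : ℕ) :
    Lev idx (IntD D N n) := by
  induction n with
  | zero =>
    have : IntD D N 0 = D N := by
      ext x; constructor
      · intro h; exact h N le_rfl le_rfl
      · intro h k h1 h2; rwa [show k = N by omega]
    rw [this]; exact hD N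
  | succ n ih =>
    have : IntD D N (n+1) = IntD D N n ∩ D (N+(n+1)) := by
      ext x; constructor
      · intro h; exact ⟨fun k h1 h2 => h k h1 (by omega), h _ (by omega) le_rfl⟩
      · intro h k h1 h2
        rcases Nat.lt_or_ge k (N+(n+1)) with h3 | h3
        · exact h.1 k h1 (by omega)
        · rw [show k = N+(n+1) by omega]; exact h.2
    rw [this]; exact ih.inter (hD _)

/-- increasing union -/
def Un (O : ℕ → Set X) : ℕ → Set X
  | 0 => O 0
  | (n+1) => Un O n ∪ O (n+1)

lemma liminf_cover {idx : ℕ → X → ℕ} (G : Good idx) (D : ℕ → Set X) (hD : ∀ k, Lev idx (D k))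
    (ε : ℝ) (hε : 0 < ε) (hcap : ∀ k, Cap idx (D k) 0 0 ≤ ε) :
    ∃ W : ℕ → Set X, Monotone W ∧ (∀ N, Lev idx (W N)) ∧ (∀ N, Cap idx (W N) 0 0 ≤ 3 * ε) ∧
      ∀ x, (∀ᶠ k in atTop, x ∈ D k) → ∃ N, x ∈ W N := by
  set γ : ℕ → ℝ := fun N => ⨅ n, Cap idx (IntD D N n) 0 0 with hγ
  have bdd : ∀ N, BddBelow (Set.range fun n => Cap idx (IntD D N n) 0 0) := fun N =>
    ⟨0, by rintro _ ⟨d, rfl⟩; exact (Cap_bounds _ _ _ _).1⟩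
  have hγle : ∀ N n, γ N ≤ Cap idx (IntD D N n) 0 0 := fun N n => ciInf_le (bdd N) n
  have hch : ∀ N, ∃ n, Cap idx (IntD D N n) 0 0 < γ N + ε * (1/2)^N := fun N =>
    exists_lt_of_ciInf_lt (lt_add_of_pos_right _ (by positivity))
  choose ν hν using hch
  set O : ℕ → Set X := fun N => IntD D N (ν N) with hO
  have hγε : ∀ N, γ N ≤ ε := fun N => (hγle N 0).trans ((Cap_mono idx (by
    intro x hx; exact hx N le_rfl (by omega)) 0 0).trans (hcap N))
  have hOU : ∀ N, O N ⊆ Un O N := by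
    intro N; cases N with
    | zero => exact subset_rfl
    | succ N => exact Set.subset_union_right
  have main : ∀ N, Cap idx (Un O N) 0 0 ≤ γ N + ε * (2 - (1/2)^N) := by
    intro N
    induction N with
    | zero => have := hν 0; simp only [pow_zero] at this ⊢; rw [Un]; linarith
    | succ N ih =>
      have h1 := Cap_ssa G (Un O N) (O (N+1)) 0 0
      have h2 : γ N ≤ Cap idx (Un O N ∩ O (N+1)) 0 0 := by
        refine (hγle N (ν N + 1 + ν (N+1))).trans (Cap_mono idx ?_ 0 0)
        intro x hx
        exact ⟨hOU N (fun k h1 h2 => hx k h1 (by omega)), fun k h1 h2 => hx k (by omega) (by omega)⟩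
      have h3 := hν (N+1)
      rw [Un]
      rw [pow_succ] at h3 ⊢
      have : Cap idx (O (N+1)) 0 0 < γ (N+1) + ε * ((1/2)^N * (1/2)) := h3
      nlinarith
  refine ⟨Un O, monotone_nat_of_le_succ fun n => Set.subset_union_left, ?_, ?_, ?_⟩
  · intro N
    induction N with
    | zero => exact Lev_IntD hD _ _
    | succ N ih => exact ih.union (Lev_IntD hD _ _)
  · intro N
    have h1 := main N
    have h2 := hγε N
    have : 0 < ε * (1/2)^N := by positivity
    nlinarith
  · intro x hx
    obtain ⟨N, hN⟩ := eventually_atTop.1 hx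
    exact ⟨N, hOU N fun k h1 _ => hN k h1⟩

/-- the flow -/
def flow (c : ℕ → ℕ → ℝ) : ℕ → ℕ → ℝ
  | 0, i => if i = 0 then c 0 0 else 0
  | (j+1), i => flow c j (i/2) * (c (j+1) i / (c (j+1) (2*(i/2)) + c (j+1) (2*(i/2)+1)))

lemma flow_nonneg (c : ℕ → ℕ → ℝ) (hc : ∀ j i, 0 ≤ c j i) (j i : ℕ) : 0 ≤ flow c j i := by
  induction j generalizing i with
  | zero => rw [flow]; split_ifs <;> simp [hc]
  | succ j ih =>
    rw [flow]
    exact mul_nonneg (ih _) (div_nonneg (hc _ _) (add_nonneg (hc _ _) (hc _ _)))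

lemma flow_zero (c : ℕ → ℕ → ℝ) (j i : ℕ) (h : c j i = 0) : flow c j i = 0 := by
  cases j with
  | zero =>
    rw [flow]; split_ifs with h1
    · rw [h1] at h; exact h
    · rfl
  | succ j => rw [flow, h]; simp

lemma flow_add (c : ℕ → ℕ → ℝ) (hc : ∀ j i, 0 ≤ c j i)
    (hrec : ∀ j i, c j i = phi (c (j+1) (2*i) + c (j+1) (2*i+1))) (j i : ℕ) :
    flow c (j+1) (2*i) + flow c (j+1) (2*i+1) = flow c j i := by
  rw [flow, flow]
  have e1 : 2 * i / 2 = i := by omega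
  have e2 : (2 * i + 1) / 2 = i := by omega
  rw [e1, e2, ← mul_add, ← add_div]
  by_cases h : c (j+1) (2*i) + c (j+1) (2*i+1) = 0
  · have : c j i = 0 := by rw [hrec, h]; simp [phi]
    rw [flow_zero c j i this]; simp
  · rw [div_self h, mul_one]

lemma flow_le (c : ℕ → ℕ → ℝ) (hc : ∀ j i, 0 ≤ c j i)
    (hrec : ∀ j i, c j i = phi (c (j+1) (2*i) + c (j+1) (2*i+1))) (j i : ℕ) :
    flow c j i ≤ c 0 0 := by
  induction j generalizing i with
  | zero => rw [flow]; split_ifs <;> simp [hc]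
  | succ j ih =>
    have h := flow_add c hc hrec j (i/2)
    have h1 := flow_nonneg c hc (j+1) (2*(i/2))
    have h2 := flow_nonneg c hc (j+1) (2*(i/2)+1)
    have h3 := ih (i/2)
    rcases Nat.mod_two_eq_zero_or_one i with hi | hi
    · have e : i = 2 * (i/2) := by omega
      rw [e]; linarith
    · have e : i = 2 * (i/2) + 1 := by omega
      rw [e]; linarith

lemma flow_pot {idx : ℕ → X → ℕ} (G : Good idx) (c : ℕ → ℕ → ℝ) (hc : ∀ j i, 0 ≤ c j i)
    (hrec : ∀ j i, c j i = phi (c (j+1) (2*i) + c (j+1) (2*i+1))) (x : X)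
    (hpos : ∀ j, 0 < c j (idx j x)) (j : ℕ) :
    ∑ l ∈ Finset.range j, flow c l (idx l x) + flow c j (idx j x) / c j (idx j x) = 1 := by
  induction j with
  | zero =>
    have := hpos 0
    rw [G.h0] at this ⊢
    simp [flow, this.ne']
  | succ j ih =>
    rw [Finset.sum_range_succ]
    rw [← ih, add_assoc]
    congr 1
    rw [flow, G.h2]
    have hp := hpos (j+1)
    have hs : 0 < c (j+1) (2*(idx j x)) + c (j+1) (2*(idx j x)+1) := by
      have a1 := hc (j+1) (2*(idx j x))
      have a2 := hc (j+1) (2*(idx j x)+1)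
      have h2 := G.h2 j x
      rcases Nat.mod_two_eq_zero_or_one (idx (j+1) x) with hi | hi
      · have e : idx (j+1) x = 2 * (idx j x) := by omega
        rw [e] at hp; linarith
      · have e : idx (j+1) x = 2 * (idx j x) + 1 := by omega
        rw [e] at hp; linarith
    rw [hrec j (idx j x), phi]
    field_simp
    ring

lemma exists_flow {idx : ℕ → X → ℕ} (G : Good idx) (D : ℕ → Set X) (hD : ∀ k, Lev idx (D k))
    (ε : ℝ) (hε : 0 < ε) (hcap : ∀ k, Cap idx (D k) 0 0 ≤ ε) :
    ∃ θ : ℕ → ℕ → ℝ, (∀ j i, 0 ≤ θ j i) ∧ (∀ j i, θ j i ≤ 3 * ε) ∧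
      (∀ j i, θ (j+1) (2*i) + θ (j+1) (2*i+1) = θ j i) ∧
      ∀ x, (∀ᶠ k in atTop, x ∈ D k) → ∃ n, 1 / 2 ≤ ∑ j ∈ Finset.range n, θ j (idx j x) := by
  obtain ⟨W, hWm, hWl, hWc, hW⟩ := liminf_cover G D hD ε hε hcap
  set c : ℕ → ℕ → ℝ := fun j i => ⨆ N, Cap idx (W N) j i with hcdef
  have bdd : ∀ j i, BddAbove (Set.range fun N => Cap idx (W N) j i) := fun j i =>
    ⟨1/2, by rintro _ ⟨d, rfl⟩; exact (Cap_bounds _ _ _ _).2⟩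
  have hle : ∀ N j i, Cap idx (W N) j i ≤ c j i := fun N j i => le_ciSup (bdd j i) N
  have hc : ∀ j i, 0 ≤ c j i := fun j i => (Cap_bounds idx (W 0) j i).1.trans (hle 0 j i)
  have hc2 : ∀ j i, c j i ≤ 1/2 := fun j i => ciSup_le fun N => (Cap_bounds _ _ _ _).2
  have ht : ∀ j i, Tendsto (fun N => Cap idx (W N) j i) atTop (nhds (c j i)) := fun j i =>
    tendsto_atTop_ciSup (fun a b hab => Cap_mono idx (hWm hab) j i) (bdd j i)
  have hrec : ∀ j i, c j i = phi (c (j+1) (2*i) + c (j+1) (2*i+1)) := by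
    intro j i
    have h2 := phi_tendsto (add_nonneg (hc (j+1) (2*i)) (hc (j+1) (2*i+1)))
      ((ht (j+1) (2*i)).add (ht (j+1) (2*i+1)))
    refine tendsto_nhds_unique (ht j i) (h2.congr fun N => (Cap_rec G _ _ _).symm)
  have h00 : c 0 0 ≤ 3 * ε := ciSup_le hWc
  refine ⟨flow c, flow_nonneg c hc, fun j i => (flow_le c hc hrec j i).trans h00,
    flow_add c hc hrec, fun x hx => ?_⟩
  obtain ⟨N, hN⟩ := hW x hx
  obtain ⟨m, hm⟩ := hWl N
  have hhalf : ∀ j, m ≤ j → c j (idx j x) = 1 / 2 := by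
    intro j hj
    refine le_antisymm (hc2 _ _) ?_
    rw [← Cap_full G (W N) j (idx j x) ⟨x, rfl⟩ fun y hy => hm j hj x y hy.symm hN]
    exact hle _ _ _
  have hstep : ∀ j, 0 < c (j+1) (idx (j+1) x) → 0 < c j (idx j x) := by
    intro j hp
    have a1 := hc (j+1) (2*(idx j x))
    have a2 := hc (j+1) (2*(idx j x)+1)
    have h2 := G.h2 j x
    have hs : 0 < c (j+1) (2*(idx j x)) + c (j+1) (2*(idx j x)+1) := by
      rcases Nat.mod_two_eq_zero_or_one (idx (j+1) x) with hi | hi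
      · have e : idx (j+1) x = 2 * (idx j x) := by omega
        rw [e] at hp; linarith
      · have e : idx (j+1) x = 2 * (idx j x) + 1 := by omega
        rw [e] at hp; linarith
    rw [hrec, phi]; positivity
  have hpos : ∀ j, 0 < c j (idx j x) := by
    intro j
    by_cases hj : m ≤ j
    · rw [hhalf j hj]; norm_num
    · push Not at hj
      have : ∀ d j, j + d = m → 0 < c j (idx j x) := by
        intro d
        induction d with
        | zero => intro j hj; rw [hhalf j (by omega)]; norm_num
        | succ d ih => intro j hj; exact hstep j (ih (j+1) (by omega))
      exact this (m - j) j (by omega)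
  have hp := flow_pot G c hc hrec x hpos m
  rw [hhalf m le_rfl] at hp
  refine ⟨m+1, ?_⟩
  rw [Finset.sum_range_succ]
  have : 0 ≤ ∑ l ∈ Finset.range m, flow c l (idx l x) :=
    Finset.sum_nonneg fun l _ => flow_nonneg c hc _ _
  linarith

end TreeCap

namespace PolarAux

section Trunc
variable {ι : Type*} [Fintype ι]

/-- mass of a dyadic cell -/
def tau (id : ℕ → ℝ → ℕ) (t : ι → ℝ) (w : ℝ) (j i : ℕ) : ℝ :=
  w * ∑ a, if id j (t a) = i then (1:ℝ) else 0

/-- sum of masses of strict ancestors -/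
def Sm (id : ℕ → ℝ → ℕ) (t : ι → ℝ) (w : ℝ) : ℕ → ℕ → ℝ
  | 0, _ => 0
  | (j+1), i => Sm id t w j (i/2) + tau id t w j (i/2)

open Classical in
/-- truncated masses -/
def gt (id : ℕ → ℝ → ℕ) (t : ι → ℝ) (w M : ℝ) (j i : ℕ) : ℝ :=
  if Sm id t w j i < M then tau id t w j i / M else 0

variable (id : ℕ → ℝ → ℕ) (t : ι → ℝ) (w M : ℝ)

lemma tau_nonneg (hw : 0 ≤ w) (j i : ℕ) : 0 ≤ tau id t w j i :=
  mul_nonneg hw (Finset.sum_nonneg fun a _ => by split_ifs <;> norm_num)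

lemma tau_le (hw : 0 ≤ w) (hc : w * Fintype.card ι ≤ 1) (j i : ℕ) : tau id t w j i ≤ 1 := by
  refine le_trans ?_ hc
  unfold tau
  refine mul_le_mul_of_nonneg_left ?_ hw
  calc ∑ a, (if id j (t a) = i then (1:ℝ) else 0) ≤ ∑ a : ι, (1:ℝ) :=
        Finset.sum_le_sum fun a _ => by split_ifs <;> norm_num
    _ = Fintype.card ι := by simp

lemma gt_nonneg (hw : 0 ≤ w) (hM : 0 < M) (j i : ℕ) : 0 ≤ gt id t w M j i := by
  unfold gt; split_ifs
  · exact div_nonneg (tau_nonneg id t w hw j i) hM.le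
  · exact le_rfl

lemma Sm_eq (hh : ∀ j y, id (j+1) y / 2 = id j y) (j : ℕ) (y : ℝ) :
    Sm id t w j (id j y) = ∑ l ∈ Finset.range j, tau id t w l (id l y) := by
  induction j with
  | zero => simp [Sm]
  | succ j ih => rw [Sm, hh, ih, Finset.sum_range_succ]

lemma gt_sum (hh : ∀ j y, id (j+1) y / 2 = id j y) (hw : 0 ≤ w) (hc : w * Fintype.card ι ≤ 1)
    (hM : 0 < M) (n : ℕ) (y : ℝ) :
    min 1 ((∑ l ∈ Finset.range n, tau id t w l (id l y)) / M) ≤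
      ∑ l ∈ Finset.range n, gt id t w M l (id l y) ∧
    ∑ l ∈ Finset.range n, gt id t w M l (id l y) ≤
      (∑ l ∈ Finset.range n, tau id t w l (id l y)) / M ∧
    ∑ l ∈ Finset.range n, gt id t w M l (id l y) ≤ (M + 1) / M := by
  induction n with
  | zero => simp; positivity
  | succ n ih =>
    obtain ⟨h1, h2, h3⟩ := ih
    rw [Finset.sum_range_succ, Finset.sum_range_succ]
    have hS := Sm_eq id t w hh n y
    have ht0 := tau_nonneg id t w hw n (id n y)
    have ht1 := tau_le id t w hw hc n (id n y)
    set P := ∑ l ∈ Finset.range n, tau id t w l (id l y)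
    set Q := ∑ l ∈ Finset.range n, gt id t w M l (id l y)
    by_cases h : P < M
    · have hg : gt id t w M n (id n y) = tau id t w n (id n y) / M := by
        unfold gt; rw [if_pos (by rw [hS]; exact h)]
      rw [hg, add_div]
      have hP : P / M ≤ 1 := by rw [div_le_one hM]; exact h.le
      rw [min_eq_right hP] at h1
      refine ⟨(min_le_right _ _).trans (by linarith), by linarith, ?_⟩
      rw [add_div]
      have : tau id t w n (id n y) / M ≤ 1 / M := by gcongr
      have : M / M = 1 := div_self hM.ne'
      linarith
    · have hg : gt id t w M n (id n y) = 0 := by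
        unfold gt; rw [if_neg (by rw [hS]; exact h)]
      push Not at h
      have hP : 1 ≤ P / M := by rw [le_div_iff₀ hM]; linarith
      rw [min_eq_left hP] at h1
      rw [hg, add_zero]
      refine ⟨(min_le_left _ _).trans h1, h2.trans (by gcongr; linarith), h3⟩

lemma gt_sum_ge (hh : ∀ j y, id (j+1) y / 2 = id j y) (hw : 0 ≤ w) (hc : w * Fintype.card ι ≤ 1)
    (hM : 0 < M) (n : ℕ) (y : ℝ) (h : M ≤ ∑ l ∈ Finset.range n, tau id t w l (id l y)) :
    1 ≤ ∑ l ∈ Finset.range n, gt id t w M l (id l y) := by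
  have h1 := (gt_sum id t w M hh hw hc hM n y).1
  rwa [min_eq_left (by rw [le_div_iff₀ hM]; linarith)] at h1

lemma gt_energy (hh : ∀ j y, id (j+1) y / 2 = id j y) (hw : 0 ≤ w) (hc : w * Fintype.card ι ≤ 1)
    (hM : 1 ≤ M) (n : ℕ) (s : ℕ → Finset ℕ) :
    ∑ j ∈ Finset.range n, ∑ i ∈ s j, gt id t w M j i ^ 2 ≤ 2 / M := by
  have hM0 : 0 < M := by linarith
  have h1 : ∀ j i, gt id t w M j i ^ 2 ≤
      (w / M) * ∑ a, (if id j (t a) = i then gt id t w M j i else 0) := by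
    intro j i
    have e : ∑ a, (if id j (t a) = i then gt id t w M j i else 0) =
        (∑ a, (if id j (t a) = i then (1:ℝ) else 0)) * gt id t w M j i := by
      rw [Finset.sum_mul]; apply Finset.sum_congr rfl; intro a _; split_ifs <;> simp
    have e2 : (w / M) * ∑ a, (if id j (t a) = i then gt id t w M j i else 0) =
        (tau id t w j i / M) * gt id t w M j i := by
      rw [e]; unfold tau; ring
    rw [e2, sq]
    refine mul_le_mul_of_nonneg_right ?_ (gt_nonneg id t w M hw hM0 j i)
    unfold gt; split_ifs
    · exact le_rfl
    · exact div_nonneg (tau_nonneg id t w hw j i) hM0.le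
  have h2 : ∀ j, ∑ i ∈ s j, gt id t w M j i ^ 2 ≤ (w / M) * ∑ a, gt id t w M j (id j (t a)) := by
    intro j
    calc ∑ i ∈ s j, gt id t w M j i ^ 2
        ≤ ∑ i ∈ s j, (w / M) * ∑ a, (if id j (t a) = i then gt id t w M j i else 0) :=
          Finset.sum_le_sum fun i _ => h1 j i
      _ = (w / M) * ∑ a, ∑ i ∈ s j, (if id j (t a) = i then gt id t w M j i else 0) := by
          rw [← Finset.mul_sum, Finset.sum_comm]
      _ ≤ _ := by
          refine mul_le_mul_of_nonneg_left ?_ (by positivity)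
          apply Finset.sum_le_sum
          intro a _
          rw [Finset.sum_ite_eq]
          split_ifs
          · exact le_rfl
          · exact gt_nonneg id t w M hw hM0 _ _
  calc ∑ j ∈ Finset.range n, ∑ i ∈ s j, gt id t w M j i ^ 2
      ≤ ∑ j ∈ Finset.range n, (w / M) * ∑ a, gt id t w M j (id j (t a)) :=
        Finset.sum_le_sum fun j _ => h2 j
    _ = (w / M) * ∑ a, ∑ j ∈ Finset.range n, gt id t w M j (id j (t a)) := by
        rw [← Finset.mul_sum, Finset.sum_comm]
    _ ≤ (w / M) * ∑ a : ι, (M + 1) / M := by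
        refine mul_le_mul_of_nonneg_left ?_ (by positivity)
        exact Finset.sum_le_sum fun a _ => (gt_sum id t w M hh hw hc hM0 n (t a)).2.2
    _ = (w * Fintype.card ι) * ((M + 1) / M) / M := by
        rw [Finset.sum_const, nsmul_eq_mul, Finset.card_univ]; ring
    _ ≤ 1 * 2 / M := by
        gcongr
        rw [div_le_iff₀ hM0]; linarith
    _ = 2 / M := by ring

end Trunc

/-- shifted grid -/
def idx1 (j : ℕ) (y : ℝ) : ℕ := idx j (y + 1/3)

lemma idx1_half (j : ℕ) (y : ℝ) : idx1 (j+1) y / 2 = idx1 j y := idx_half j _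

lemma idx1_cases (j : ℕ) (y : ℝ) (hy : 0 ≤ y) :
    idx1 j y = idx j y + 2^j/3 ∨ idx1 j y = idx j y + 2^j/3 + 1 := by
  set k := idx j y with hk
  set q := idx1 j y with hq
  have h1 : (k : ℝ) ≤ 2^j * y := Nat.floor_le (by positivity)
  have h2 : 2^j * y < k + 1 := Nat.lt_floor_add_one _
  have h3 : (q : ℝ) ≤ 2^j * (y + 1/3) := Nat.floor_le (by positivity)
  have h4 : 2^j * (y + 1/3) < q + 1 := Nat.lt_floor_add_one _
  have h5 : (3 * q : ℝ) < 3 * k + 3 + 2^j := by nlinarith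
  have h6 : (3 * k + 2^j : ℝ) < 3 * q + 3 := by nlinarith
  have h5' : 3 * q < 3 * k + 3 + 2^j := by exact_mod_cast h5
  have h6' : 3 * k + 2^j < 3 * q + 3 := by exact_mod_cast h6
  generalize 2^j = P at *
  omega

lemma grid_aux (j : ℕ) (y t : ℝ) (hy : 0 ≤ y) (hyt : y ≤ t) (h : 2^j * (3 * (t - y)) < 1) :
    idx j y = idx j t ∨ idx1 j y = idx1 j t := by
  by_contra hcon
  push Not at hcon
  have hm : ∀ u v : ℝ, u ≤ v → idx j u ≤ idx j v := fun u v huv => by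
    unfold idx; gcongr
  have c1 : idx j y < idx j t := lt_of_le_of_ne (hm _ _ hyt) hcon.1
  have c2 : idx1 j y < idx1 j t := lt_of_le_of_ne (hm _ _ (by linarith)) hcon.2
  have a1 : 2^j * y < idx j y + 1 := Nat.lt_floor_add_one _
  have a2 : 2^j * (y + 1/3) < idx1 j y + 1 := Nat.lt_floor_add_one _
  have a3 : (idx j t : ℝ) ≤ 2^j * t := Nat.floor_le (mul_nonneg (by positivity) (hy.trans hyt))
  have a4 : (idx1 j t : ℝ) ≤ 2^j * (t + 1/3) :=
    Nat.floor_le (mul_nonneg (by positivity) (by linarith))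
  have b1 : (idx j y : ℝ) + 1 ≤ idx j t := by exact_mod_cast c1
  have b2 : (idx1 j y : ℝ) + 1 ≤ idx1 j t := by exact_mod_cast c2
  have e1 : (3 * idx j t + 2^j : ℝ) < 3 * idx1 j t + 1 := by nlinarith
  have e2 : (3 * idx1 j t : ℝ) < 3 * idx j t + 2^j + 1 := by nlinarith
  have e1' : 3 * idx j t + 2^j < 3 * idx1 j t + 1 := by exact_mod_cast e1
  have e2' : 3 * idx1 j t < 3 * idx j t + 2^j + 1 := by exact_mod_cast e2
  have : 3 ∣ 2^j := by
    generalize 2^j = P at *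
    omega
  have := Nat.Prime.dvd_of_dvd_pow Nat.prime_three this
  omega

lemma grid (j : ℕ) (y t : ℝ) (hy : 0 ≤ y) (ht : 0 ≤ t) (h : 2^j * (3 * |y - t|) < 1) :
    idx j t = idx j y ∨ idx1 j t = idx1 j y := by
  rcases le_total y t with hl | hl
  · rw [abs_sub_comm, abs_of_nonneg (by linarith)] at h
    exact (grid_aux j y t hy hl h).imp Eq.symm Eq.symm
  · rw [abs_of_nonneg (by linarith)] at h
    exact grid_aux j t y ht hl h

/-- two-grid kernel -/
def Kc (m : ℕ) (y t : ℝ) : ℝ := ∑ l ∈ Finset.range m,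
  ((if idx l t = idx l y then (1:ℝ) else 0) + (if idx1 l t = idx1 l y then (1:ℝ) else 0))

lemma Kc_ge (m J : ℕ) (hJ : J ≤ m) (y t : ℝ) (hy : 0 ≤ y) (ht : 0 ≤ t)
    (h : ∀ l < J, 2^l * (3 * |y - t|) < 1) : (J : ℝ) ≤ Kc m y t := by
  calc (J : ℝ) = ∑ l ∈ Finset.range J, (1:ℝ) := by simp
    _ ≤ ∑ l ∈ Finset.range J, ((if idx l t = idx l y then (1:ℝ) else 0) +
          (if idx1 l t = idx1 l y then (1:ℝ) else 0)) := by
        apply Finset.sum_le_sum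
        intro l hl
        rcases grid l y t hy ht (h l (Finset.mem_range.1 hl)) with e | e
        · rw [if_pos e]; split_ifs <;> norm_num
        · rw [if_pos e]; split_ifs <;> norm_num
    _ ≤ _ := by
        apply Finset.sum_le_sum_of_subset_of_nonneg
        · intro l hl; simp at hl ⊢; omega
        · intro l _ _; split_ifs <;> norm_num

lemma Kc_nonneg (m : ℕ) (y t : ℝ) : 0 ≤ Kc m y t :=
  Finset.sum_nonneg fun l _ => by split_ifs <;> norm_num

lemma kernel (m : ℕ) (y t : ℝ) (hy : 0 ≤ y) (ht : 0 ≤ t) (hy1 : y ≤ 1) (ht1 : t ≤ 1) :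
    (m : ℝ) ≤ Kc m y t ∨
      (0 < |y - t| ∧ 1 + 1 / |y - t| ≤ Real.exp (Real.log 6 + Kc m y t * Real.log 2)) := by
  by_cases h : ∀ l < m, 2^l * (3 * |y - t|) < 1
  · exact Or.inl (Kc_ge m m le_rfl y t hy ht h)
  · right
    push Not at h
    classical
    have hJ := Nat.find_spec h
    have hmin := fun l (hl : l < Nat.find h) => Nat.find_min h hl
    set J := Nat.find h
    have hK := Kc_ge m J hJ.1.le y t hy ht (by
      intro l hl
      have := hmin l hl
      by_contra hc
      exact this ⟨by omega, not_lt.1 hc⟩)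
    have hpos : 0 < |y - t| := by
      by_contra hc
      have : |y - t| = 0 := le_antisymm (not_lt.1 hc) (abs_nonneg _)
      have h2 := hJ.2
      rw [this] at h2; norm_num at h2
    refine ⟨hpos, ?_⟩
    have hle1 : |y - t| ≤ 1 := by rw [abs_le]; constructor <;> linarith
    calc 1 + 1 / |y - t| ≤ 6 * 2^J := by
          have h2 := hJ.2
          have : 1 / |y - t| ≤ 3 * 2^J := by
            rw [div_le_iff₀ hpos]; linarith
          have : 1 ≤ 1 / |y - t| := by rw [le_div_iff₀ hpos]; linarith
          linarith
      _ = Real.exp (Real.log 6 + J * Real.log 2) := by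
          rw [Real.exp_add, Real.exp_log (by norm_num), Real.exp_nat_mul,
            Real.exp_log (by norm_num)]
      _ ≤ _ := by
          apply Real.exp_le_exp.2
          have : 0 < Real.log 2 := Real.log_pos (by norm_num)
          gcongr

lemma two_grid {ι : Type*} [Fintype ι] (t : ι → ℝ) (w M : ℝ) (hw : 0 ≤ w)
    (hc : w * Fintype.card ι ≤ 1) (hM : 1 ≤ M) (m : ℕ) :
    ∃ g : ℕ → ℕ → ℝ, (∀ j i, 0 ≤ g j i) ∧ TreeCap.En g m 0 0 ≤ 18 / M ∧
      ∀ y, 0 ≤ y → 2 * M ≤ w * ∑ a, Kc (m+1) y (t a) →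
        1 ≤ ∑ j ∈ Finset.range (m+1), g j (idx j y) := by
  have hM0 : 0 < M := by linarith
  set g0 := gt idx t w M with hg0
  set g1 := gt idx1 t w M with hg1
  have p0 : ∀ j i, 0 ≤ g0 j i := gt_nonneg idx t w M hw hM0
  have p1 : ∀ j i, 0 ≤ g1 j i := gt_nonneg idx1 t w M hw hM0
  refine ⟨fun j i => g0 j i + g1 j (i + 2^j/3) + g1 j (i + 2^j/3 + 1), ?_, ?_, ?_⟩
  · intro j i
    have := p0 j i; have := p1 j (i + 2^j/3); have := p1 j (i + 2^j/3 + 1)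
    positivity
  · rw [TreeCap.En_eq]
    simp only [zero_add, mul_zero]
    have e0 := gt_energy idx t w M idx_half hw hc hM (m+1) (fun j => Finset.range (2^j))
    have e1 := gt_energy idx1 t w M idx1_half hw hc hM (m+1)
      (fun j => (Finset.range (2^j)).image (fun i => i + 2^j/3))
    have e2 := gt_energy idx1 t w M idx1_half hw hc hM (m+1)
      (fun j => (Finset.range (2^j)).image (fun i => i + 2^j/3 + 1))
    have c1 : ∀ j, ∑ i ∈ (Finset.range (2^j)).image (fun i => i + 2^j/3), g1 j i ^ 2 =
        ∑ i ∈ Finset.range (2^j), g1 j (i + 2^j/3) ^ 2 := fun j =>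
      Finset.sum_image (fun a _ b _ h => by simpa using h)
    have c2 : ∀ j, ∑ i ∈ (Finset.range (2^j)).image (fun i => i + 2^j/3 + 1), g1 j i ^ 2 =
        ∑ i ∈ Finset.range (2^j), g1 j (i + 2^j/3 + 1) ^ 2 := fun j =>
      Finset.sum_image (fun a _ b _ h => by simpa using h)
    simp only [← hg1, c1, c2] at e1 e2
    calc _ ≤ ∑ l ∈ Finset.range (m+1), ∑ r ∈ Finset.range (2^l),
          (3 * g0 l r ^ 2 + 3 * g1 l (r + 2^l/3) ^ 2 + 3 * g1 l (r + 2^l/3 + 1) ^ 2) := by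
          apply Finset.sum_le_sum; intro l _
          apply Finset.sum_le_sum; intro r _
          nlinarith [sq_nonneg (g0 l r - g1 l (r + 2^l/3)),
            sq_nonneg (g0 l r - g1 l (r + 2^l/3 + 1)),
            sq_nonneg (g1 l (r + 2^l/3) - g1 l (r + 2^l/3 + 1))]
      _ = 3 * (∑ l ∈ Finset.range (m+1), ∑ r ∈ Finset.range (2^l), g0 l r ^ 2) +
          3 * (∑ l ∈ Finset.range (m+1), ∑ r ∈ Finset.range (2^l), g1 l (r + 2^l/3) ^ 2) +
          3 * (∑ l ∈ Finset.range (m+1), ∑ r ∈ Finset.range (2^l), g1 l (r + 2^l/3 + 1) ^ 2) := by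
          simp only [Finset.sum_add_distrib, Finset.mul_sum]
      _ ≤ 3 * (2 / M) + 3 * (2 / M) + 3 * (2 / M) := by gcongr
      _ = 18 / M := by ring
  · intro y hy h
    have hsum : w * ∑ a, Kc (m+1) y (t a) =
        ∑ l ∈ Finset.range (m+1), tau idx t w l (idx l y) +
        ∑ l ∈ Finset.range (m+1), tau idx1 t w l (idx1 l y) := by
      unfold Kc tau
      rw [Finset.sum_comm]
      simp only [Finset.sum_add_distrib, mul_add, Finset.mul_sum]
    rw [hsum] at h
    have hor : M ≤ ∑ l ∈ Finset.range (m+1), tau idx t w l (idx l y) ∨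
        M ≤ ∑ l ∈ Finset.range (m+1), tau idx1 t w l (idx1 l y) := by
      by_contra hcon; push Not at hcon; linarith
    rcases hor with h' | h'
    · refine (gt_sum_ge idx t w M idx_half hw hc hM0 (m+1) y h').trans ?_
      apply Finset.sum_le_sum
      intro j _
      have := p1 j (idx j y + 2^j/3); have := p1 j (idx j y + 2^j/3 + 1)
      linarith
    · refine (gt_sum_ge idx1 t w M idx1_half hw hc hM0 (m+1) y h').trans ?_
      apply Finset.sum_le_sum
      intro j _
      have := p0 j (idx j y)
      have := p1 j (idx j y + 2^j/3); have := p1 j (idx j y + 2^j/3 + 1)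
      rcases idx1_cases j y hy with e | e <;> rw [e] <;> linarith

end PolarAux

namespace PolarAux

/-- the unit interval as boundary of the dyadic tree -/
lemma good_Ico : TreeCap.Good (fun (j : ℕ) (x : Set.Ico (0:ℝ) 1) => idx j x.1) where
  h0 x := by
    have := idx_lt x.2.1 x.2.2 0
    simp only [pow_zero] at this
    omega
  h2 j x := idx_half j _
  h3 j x l hl := by
    have h1 := idx_lt x.2.1 x.2.2 j
    have h2 : l < 2^(j+1) := by rw [pow_succ]; omega
    have h3 : (l:ℝ) < 2^(j+1) := by exact_mod_cast h2
    refine ⟨⟨(l:ℝ) / 2^(j+1), by positivity, by rw [div_lt_one (by positivity)]; exact h3⟩, ?_⟩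
    simp only [idx]
    rw [mul_div_cancel₀ _ (by positivity)]
    exact Nat.floor_natCast l

lemma poly_step (Q : Polynomial ℂ) (n : ℕ) (hn : 1 ≤ n) (hd : Q.natDegree ≤ n) (a b : ℝ)
    (hab : a < b) (z : ℝ) (hz : z ∈ Set.Icc a b) (hQz : ‖Q.eval (z : ℂ)‖ = 1) (M : ℕ)
    (hM : 1 ≤ M) :
    ∃ (g : ℕ → ℕ → ℝ) (m : ℕ), (∀ j i, 0 ≤ g j i) ∧ TreeCap.En g m 0 0 ≤ 18 / M ∧
      ∀ y : ℝ, 0 ≤ y → y ≤ 1/2 →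
        ‖Q.eval ((a + (2*(b-a)) * y : ℝ) : ℂ)‖ ≤
          Real.exp (-(n * (Real.log 6 + 2 * M * Real.log 2))) →
        1 ≤ ∑ j ∈ Finset.range (m+1), g j (idx j y) := by
  set L := 2 * (b - a) with hLdef
  have hL : 0 < L := by rw [hLdef]; linarith
  have hn0 : (0:ℝ) < n := by exact_mod_cast hn
  set l := Q.roots.toList with hl
  have hcard : l.length ≤ n := by
    rw [hl, Multiset.length_toList]; exact (Polynomial.card_roots' Q).trans hd
  have hev : ∀ x : ℂ, ‖Q.eval x‖ = ‖Q.leadingCoeff‖ * ∏ i : Fin l.length, ‖x - l[i.1]‖ := by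
    intro x
    rw [Polynomial.Splits.eval_eq_prod_roots (IsAlgClosed.splits Q) x, norm_mul]
    congr 1
    rw [← norm_prod, Fin.prod_univ_fun_getElem l (fun r => x - r)]
    rw [← Multiset.prod_coe, ← Multiset.map_coe, hl, Multiset.coe_toList]
  set t : Fin l.length → ℝ := fun i => (max a (min (l[i.1]).re b) - a) / L with ht
  have ht0 : ∀ i, 0 ≤ t i := fun i => by
    simp only [ht]; apply div_nonneg _ hL.le; linarith [le_max_left a (min (l[i.1]).re b)]
  have ht1 : ∀ i, t i ≤ 1 := fun i => by
    simp only [ht]; rw [div_le_one hL]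
    have : max a (min (l[i.1]).re b) ≤ b := max_le hab.le (min_le_right _ _)
    linarith
  have hwc : (1/(n:ℝ)) * Fintype.card (Fin l.length) ≤ 1 := by
    rw [Fintype.card_fin, one_div, inv_mul_le_iff₀ hn0, mul_one]
    exact_mod_cast hcard
  obtain ⟨g, hg0, hgE, hg⟩ := two_grid t (1/(n:ℝ)) M (by positivity) hwc
    (by exact_mod_cast hM) (2*M*n)
  refine ⟨g, 2*M*n, hg0, hgE, fun y hy0 hy1 hQ => hg y hy0 ?_⟩
  rw [one_div, inv_mul_eq_div, le_div_iff₀ hn0]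
  set m := 2*M*n with hm
  by_cases hex : ∃ i, ((m+1 : ℕ):ℝ) ≤ Kc (m+1) y (t i)
  · obtain ⟨i, hi⟩ := hex
    have h1 : Kc (m+1) y (t i) ≤ ∑ i, Kc (m+1) y (t i) :=
      Finset.single_le_sum (f := fun i => Kc (m+1) y (t i)) (fun j _ => Kc_nonneg _ _ _)
        (Finset.mem_univ i)
    have h2 : ((m+1 : ℕ):ℝ) = 2 * M * n + 1 := by rw [hm]; push_cast; ring
    linarith
  · push Not at hex
    set x : ℝ := a + L * y with hx
    have hxab : x ∈ Set.Icc a b := by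
      constructor
      · rw [hx]; nlinarith
      · rw [hx, hLdef]; nlinarith
    have hfac : ∀ i : Fin l.length, ‖(z:ℂ) - l[i.1]‖ ≤
        ‖(x:ℂ) - l[i.1]‖ * Real.exp (Real.log 6 + Kc (m+1) y (t i) * Real.log 2) := by
      intro i
      rcases kernel (m+1) y (t i) hy0 (ht0 i) (by linarith) (ht1 i) with h | ⟨hδ, h⟩
      · exact absurd h (not_le.2 (hex i))
      · set r := l[i.1] with hr
        refine le_trans ?_ (mul_le_mul_of_nonneg_left h (norm_nonneg _))
        have e1 : L * |y - t i| = |x - max a (min r.re b)| := by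
          rw [← abs_of_pos hL, ← abs_mul]
          congr 1
          simp only [ht, hx]; rw [mul_sub, mul_div_cancel₀ _ hL.ne']; ring
        have e2 : |x - max a (min r.re b)| ≤ |x - r.re| := by
          obtain ⟨h1, h2⟩ := hxab
          rcases le_total r.re b with h3 | h3
          · rw [min_eq_left h3]
            rcases le_total a r.re with h4 | h4
            · rw [max_eq_right h4]
            · rw [max_eq_left h4, abs_of_nonneg (by linarith), abs_of_nonneg (by linarith)]
              linarith
          · rw [min_eq_right h3, max_eq_right hab.le, abs_of_nonpos (by linarith),
              abs_of_nonpos (by linarith)]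
            linarith
        have e3 : |x - r.re| ≤ ‖(x:ℂ) - r‖ := by
          simpa using Complex.abs_re_le_norm ((x:ℂ) - r)
        have e4 : ‖(z:ℂ) - x‖ ≤ L := by
          rw [← Complex.ofReal_sub, Complex.norm_real, Real.norm_eq_abs, abs_le]
          obtain ⟨h1, h2⟩ := hxab
          obtain ⟨h3, h4⟩ := hz
          constructor <;> linarith
        have e5 : L ≤ ‖(x:ℂ) - r‖ * (1 / |y - t i|) := by
          rw [mul_one_div, le_div_iff₀ hδ]; linarith
        calc ‖(z:ℂ) - r‖ = ‖((z:ℂ) - x) + (x - r)‖ := by congr 1; ring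
          _ ≤ ‖(z:ℂ) - x‖ + ‖(x:ℂ) - r‖ := norm_add_le _ _
          _ ≤ ‖(x:ℂ) - r‖ * (1 + 1 / |y - t i|) := by rw [mul_add]; linarith
    have h1 : (1:ℝ) ≤ ‖Q.eval (x:ℂ)‖ *
        Real.exp (∑ i, (Real.log 6 + Kc (m+1) y (t i) * Real.log 2)) := by
      rw [← hQz, hev, hev, Real.exp_sum, mul_assoc, ← Finset.prod_mul_distrib]
      apply mul_le_mul_of_nonneg_left _ (norm_nonneg _)
      exact Finset.prod_le_prod (fun i _ => norm_nonneg _) (fun i _ => hfac i)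
    have h2 := h1.trans (mul_le_mul_of_nonneg_right hQ (Real.exp_pos _).le)
    rw [← Real.exp_add, Real.one_le_exp_iff, Finset.sum_add_distrib, ← Finset.sum_mul] at h2
    simp only [Finset.sum_const, Finset.card_univ, Fintype.card_fin, nsmul_eq_mul] at h2
    have h3 : (l.length : ℝ) * Real.log 6 ≤ n * Real.log 6 :=
      mul_le_mul_of_nonneg_right (by exact_mod_cast hcard) (Real.log_nonneg (by norm_num))
    have h4 : 0 < Real.log 2 := Real.log_pos (by norm_num)
    refine le_of_mul_le_mul_right ?_ h4
    nlinarith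

lemma main_aux (a b : ℝ) (hab : a < b)
    (n : ℕ → ℕ) (hmono : StrictMono n) (Q : ℕ → Polynomial ℂ)
    (hdeg : ∀ k, (Q k).natDegree ≤ n k)
    (hnorm : ∀ k, IsGreatest
      ((fun x : ℝ => ‖(Q k).eval (x : ℂ)‖) '' Set.Icc a b) 1) :
    PolarSet {z : ℂ | z ∈ Complex.ofReal '' Set.Icc a b ∧
      Filter.Tendsto (fun k => ‖(Q k).eval z‖ ^ (1 / (n k : ℝ)))
        Filter.atTop (nhds 0)} := by
  set L := 2 * (b - a) with hLdef
  have hL : 0 < L := by rw [hLdef]; linarith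
  have hn1 : ∀ k, 1 ≤ n (k+1) := fun k => by
    have := hmono.le_apply (x := k+1); omega
  have hflow : ∀ i : ℕ, ∃ θ : ℕ → ℕ → ℝ, (∀ j l, 0 ≤ θ j l) ∧ (∀ j l, θ j l ≤ 3 * (18 / 2^i)) ∧
      (∀ j l, θ (j+1) (2*l) + θ (j+1) (2*l+1) = θ j l) ∧
      ∀ y : ℝ, 0 ≤ y → y ≤ 1/2 →
        Filter.Tendsto (fun k => ‖(Q k).eval ((a + L * y : ℝ) : ℂ)‖ ^ (1 / (n k : ℝ)))
          Filter.atTop (nhds 0) → ∃ N, 1/2 ≤ ∑ j ∈ Finset.range N, θ j (idx j y) := by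
    intro i
    have hst : ∀ k : ℕ, ∃ (g : ℕ → ℕ → ℝ) (m : ℕ), (∀ j i, 0 ≤ g j i) ∧
        TreeCap.En g m 0 0 ≤ 18 / 2^i ∧ ∀ y : ℝ, 0 ≤ y → y ≤ 1/2 →
        ‖(Q (k+1)).eval ((a + L * y : ℝ) : ℂ)‖ ≤
          Real.exp (-(n (k+1) * (Real.log 6 + 2 * 2^i * Real.log 2))) →
        1 ≤ ∑ j ∈ Finset.range (m+1), g j (idx j y) := by
      intro k
      obtain ⟨⟨z, hz, hz1⟩, -⟩ := hnorm (k+1)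
      have := poly_step (Q (k+1)) (n (k+1)) (hn1 k) (hdeg _) a b hab z hz hz1 (2^i)
        Nat.one_le_two_pow
      rw [← hLdef, Nat.cast_pow, Nat.cast_ofNat] at this
      exact this
    choose g m hg0 hgE hg using hst
    obtain ⟨θ, h1, h2, h3, h4⟩ := TreeCap.exists_flow good_Ico
      (fun k => TreeCap.DSet (fun (j : ℕ) (x : Set.Ico (0:ℝ) 1) => idx j x.1) (g k) (m k))
      (fun k => TreeCap.Lev_DSet good_Ico (g k) (m k)) (18/2^i) (by positivity)
      (fun k => (TreeCap.Cap_DSet good_Ico (g k) (hg0 k) (m k)).trans (hgE k))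
    refine ⟨θ, h1, h2, h3, fun y hy0 hy1 hlim => ?_⟩
    refine h4 ⟨y, hy0, by linarith⟩ ?_
    set T := Real.log 6 + 2 * 2^i * Real.log 2 with hT
    have hev := ((tendsto_add_atTop_iff_nat 1).2 hlim).eventually
      (gt_mem_nhds (Real.exp_pos (-T)))
    filter_upwards [hev] with k hk
    refine hg k y hy0 hy1 ?_
    have hne : n (k+1) ≠ 0 := by have := hn1 k; omega
    rw [one_div] at hk
    rw [← Real.rpow_inv_natCast_pow (norm_nonneg
      ((Q (k+1)).eval ((a + L * y : ℝ) : ℂ))) hne]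
    refine (pow_le_pow_left₀ (by positivity) hk.le _).trans ?_
    rw [← Real.exp_nat_mul]
    apply le_of_eq; congr 1; ring
  choose θ h0 hle hadd hbig using hflow
  have hsum : ∀ j l, Summable (fun i => θ i j l) := fun j l => by
    refine Summable.of_nonneg_of_le (fun i => h0 i j l) (fun i => hle i j l)
      (f := fun i => 3 * (18 / 2^i)) ?_
    have := (summable_geometric_two).mul_left (54:ℝ)
    refine this.congr fun i => ?_
    rw [one_div, inv_pow]; ring
  refine polar_of_flow (a := a) hL (fun j l => ∑' i, θ i j l)
    (fun j l => tsum_nonneg fun i => h0 i j l) ?_ _ ?_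
  · intro j l
    rw [← (hsum _ _).tsum_add (hsum _ _)]
    exact tsum_congr fun i => hadd i j l
  · rintro z ⟨⟨x, hx, rfl⟩, hlim⟩
    have hxy : x = a + L * ((x - a) / L) := by rw [mul_div_cancel₀ _ hL.ne']; ring
    have hy0 : 0 ≤ (x - a) / L := div_nonneg (by linarith [hx.1]) hL.le
    have hy1 : (x - a) / L ≤ 1/2 := by
      rw [div_le_iff₀ hL, hLdef]; linarith [hx.2]
    refine ⟨(x-a)/L, hy0, by linarith, by rw [← hxy], fun T => ?_⟩
    set y := (x-a)/L with hy
    rw [hxy] at hlim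
    choose N hN using fun i => hbig i y hy0 hy1 hlim
    obtain ⟨R, hR⟩ := exists_nat_ge (2 * T)
    refine ⟨(Finset.range R).sup N, ?_⟩
    calc T ≤ ∑ i ∈ Finset.range R, (1/2 : ℝ) := by simp; linarith
      _ ≤ ∑ i ∈ Finset.range R, ∑ j ∈ Finset.range ((Finset.range R).sup N), θ i j (idx j y) := by
          refine Finset.sum_le_sum fun i hi => (hN i).trans ?_
          refine Finset.sum_le_sum_of_subset_of_nonneg ?_ fun j _ _ => h0 _ _ _
          exact Finset.range_subset_range.2 (Finset.le_sup hi)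
      _ = ∑ j ∈ Finset.range ((Finset.range R).sup N), ∑ i ∈ Finset.range R, θ i j (idx j y) :=
          Finset.sum_comm
      _ ≤ _ := Finset.sum_le_sum fun j _ =>
          (hsum j (idx j y)).sum_le_tsum _ fun i _ => h0 _ _ _

end PolarAux

/-- If `(q_{n_k})` are polynomials with `deg q_{n_k} ≤ n_k` and sup-norm `1` on the
segment `Δ = [a,b]`, then `A = {z ∈ Δ : lim_k |q_{n_k}(z)|^{1/n_k} = 0}` is polar. -/
theorem polar_of_sup_norm_one (a b : ℝ) (hab : a < b)
    (n : ℕ → ℕ) (hmono : StrictMono n) (Q : ℕ → Polynomial ℂ)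
    (hdeg : ∀ k, (Q k).natDegree ≤ n k)
    (hnorm : ∀ k, IsGreatest
      ((fun x : ℝ => ‖(Q k).eval (x : ℂ)‖) '' Set.Icc a b) 1) :
    PolarSet {z : ℂ | z ∈ Complex.ofReal '' Set.Icc a b ∧
      Filter.Tendsto (fun k => ‖(Q k).eval z‖ ^ (1 / (n k : ℝ)))
        Filter.atTop (nhds 0)} := by
  exact PolarAux.main_aux a b hab n hmono Q hdeg hnorm
end
end

section
/- Let Δ = [a,b] ⊂ ℝ ⊂ ℂ, let f : Δ → ℝ be continuous, let α ∈ (0,1), let (n_k) be a strictly increasing sequence of naturals, and let p_{n_k}, q_{n_k} be polynomials of degree ≤ n_k with q_{n_k}(z) ≠ 0 for all z ∈ Δ and sup_{x∈Δ} |f(x) − p_{n_k}(x)/q_{n_k}(x)| ≤ α^{n_k} for all k. Define u(z,w) = limsup_{k→∞} (1/n_k)·log|q_{n_k}(z)·w − p_{n_k}(z)|. Then for every point (x,w) ∈ Δ × ℂ with w ≠ f(x), u(x,w) = limsup_{k→∞} log|q_{n_k}(x)|^{1/n_k}. -/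
open Filter Metric

noncomputable section

/-- Extended-real logarithm: `elog 0 = -∞`, otherwise the usual real logarithm. -/
def elog (x : ℝ) : EReal := if x = 0 then ⊥ else ((Real.log x : ℝ) : EReal)

theorem limsup_aux (u b : ℕ → ℝ) (hb : Tendsto b atTop (nhds 0)) :
    Filter.limsup (fun k => ((u k + b k : ℝ) : EReal)) atTop ≤
      Filter.limsup (fun k => ((u k : ℝ) : EReal)) atTop := by
  have hb' : Filter.limsup (fun k => ((b k : ℝ) : EReal)) atTop = 0 := by
    have h : Tendsto (fun k => ((b k : ℝ) : EReal)) atTop (nhds ((0 : ℝ) : EReal)) :=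
      (continuous_coe_real_ereal.tendsto 0).comp hb
    simpa using h.limsup_eq
  have h := EReal.limsup_add_le (f := atTop) (u := fun k => ((u k : ℝ) : EReal))
    (v := fun k => ((b k : ℝ) : EReal)) (Or.inr (by rw [hb']; simp)) (Or.inr (by rw [hb']; simp))
  rw [hb', add_zero] at h
  simpa [Pi.add_def] using h

theorem limsup_aux_eq (u v : ℕ → ℝ) (hb : Tendsto (fun k => v k - u k) atTop (nhds 0)) :
    Filter.limsup (fun k => ((v k : ℝ) : EReal)) atTop =
      Filter.limsup (fun k => ((u k : ℝ) : EReal)) atTop := by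
  apply le_antisymm
  · have h := limsup_aux u _ hb
    simpa only [add_sub_cancel] using h
  · have h := limsup_aux v (fun k => u k - v k) (by simpa using hb.neg)
    simpa only [add_sub_cancel] using h

/-- If `p_{n_k}/q_{n_k}` approximates `f` on `Δ = [a,b]` with error at most `α^{n_k}`
and `u(z,w) = limsup_k (1/n_k)·log|q_{n_k}(z)·w − p_{n_k}(z)|`, then for every point
`(x,w) ∈ Δ × ℂ` off the graph of `f` (i.e. `w ≠ f(x)`),
`u(x,w) = limsup_k log|q_{n_k}(x)|^{1/n_k}`. -/
theorem off_graph_value (a b : ℝ) (hab : a < b) (f : ℝ → ℝ)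
    (hf : ContinuousOn f (Set.Icc a b)) (α : ℝ) (hα : α ∈ Set.Ioo (0 : ℝ) 1)
    (n : ℕ → ℕ) (hmono : StrictMono n) (P Q : ℕ → Polynomial ℂ)
    (hP : ∀ k, (P k).natDegree ≤ n k) (hQ : ∀ k, (Q k).natDegree ≤ n k)
    (hQ0 : ∀ k, ∀ x ∈ Set.Icc a b, (Q k).eval (x : ℂ) ≠ 0)
    (happrox : ∀ k, ∀ x ∈ Set.Icc a b,
      ‖(f x : ℂ) - (P k).eval (x : ℂ) / (Q k).eval (x : ℂ)‖ ≤ α ^ n k) :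
    ∀ x ∈ Set.Icc a b, ∀ w : ℂ, w ≠ (f x : ℂ) →
      Filter.limsup (fun k => ((1 / (n k : ℝ) : ℝ) : EReal) *
          elog (‖(Q k).eval (x : ℂ) * w - (P k).eval (x : ℂ)‖))
        Filter.atTop =
      Filter.limsup (fun k => ((1 / (n k : ℝ) : ℝ) : EReal) *
          elog (‖(Q k).eval (x : ℂ)‖)) Filter.atTop := by
  intro x hx w hw
  have hn : Tendsto n atTop atTop := hmono.tendsto_atTop
  have hα' : Tendsto (fun k => α ^ n k) atTop (nhds 0) :=
    (tendsto_pow_atTop_nhds_zero_of_lt_one hα.1.le hα.2).comp hn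
  set r : ℕ → ℂ := fun k => (P k).eval (x : ℂ) / (Q k).eval (x : ℂ) with hr
  have h1 : Tendsto (fun k => (f x : ℂ) - r k) atTop (nhds 0) :=
    squeeze_zero_norm (fun k => happrox k x hx) hα'
  have h2 : Tendsto (fun k => ‖w - r k‖) atTop (nhds ‖w - f x‖) := by
    have h := (h1.const_add (w - f x)).norm
    simpa using h
  have hne : ‖w - f x‖ ≠ 0 := norm_ne_zero_iff.mpr (sub_ne_zero.mpr hw)
  have hev : ∀ᶠ k in atTop, ‖w - r k‖ ≠ 0 := h2.eventually_ne hne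
  have h3 : Tendsto (fun k => (1 / (n k : ℝ)) * Real.log ‖w - r k‖) atTop (nhds 0) := by
    have h := (tendsto_one_div_atTop_nhds_zero_nat (𝕜 := ℝ)).comp hn
    simpa using h.mul (h2.log hne)
  have hfac : ∀ k, ‖(Q k).eval (x : ℂ) * w - (P k).eval (x : ℂ)‖ =
      ‖(Q k).eval (x : ℂ)‖ * ‖w - r k‖ := by
    intro k
    rw [← norm_mul, mul_sub, hr]
    simp only
    rw [mul_div_cancel₀ _ (hQ0 k x hx)]
  have hq : ∀ k, ‖(Q k).eval (x : ℂ)‖ ≠ 0 := fun k => norm_ne_zero_iff.mpr (hQ0 k x hx)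
  have hL : (fun k => ((1 / (n k : ℝ) : ℝ) : EReal) *
          elog (‖(Q k).eval (x : ℂ) * w - (P k).eval (x : ℂ)‖)) =ᶠ[atTop]
      fun k => (((1 / (n k : ℝ)) * Real.log ‖(Q k).eval (x : ℂ)‖ +
        (1 / (n k : ℝ)) * Real.log ‖w - r k‖ : ℝ) : EReal) := by
    filter_upwards [hev] with k hk
    rw [hfac, elog, if_neg (mul_ne_zero (hq k) hk), Real.log_mul (hq k) hk, ← EReal.coe_mul,
      mul_add]
  have hR : (fun k => ((1 / (n k : ℝ) : ℝ) : EReal) * elog (‖(Q k).eval (x : ℂ)‖)) =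
      fun k => (((1 / (n k : ℝ)) * Real.log ‖(Q k).eval (x : ℂ)‖ : ℝ) : EReal) := by
    funext k
    rw [elog, if_neg (hq k), ← EReal.coe_mul]
  rw [Filter.limsup_congr hL, hR]
  apply limsup_aux_eq
  simpa only [add_sub_cancel_left] using h3
end
end

section
/- Let A₀ ⊂ ℂ be a compact set of positive logarithmic capacity and let U(0,r) = {z ∈ ℂ : |z| < r} be an open disk containing A₀. For each n, let T_n be a polynomial of degree ≤ n minimizing ‖T_n‖_{A₀} among all polynomials of degree ≤ n normalized by ‖T_n‖_{U(0,r)} = 1. Then the limit lim_{n→∞} ‖T_n‖_{A₀}^{1/n} exists and equals τ(A₀, U(0,r)) = exp(−max_{z∈\overline{U(0,r)}} V*(z, A₀)); moreover ‖T_n‖_{A₀}^{1/n} ≥ τ(A₀, U(0,r)) for every n ≥ 1. -/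
open Filter Metric

noncomputable section

/-- The (pre-regularized) Green extremal function of a set `E ⊆ ℂ`:
`V(z,E) = sup { (1/m)·log|p(z)| : deg p ≤ m, m ≥ 1, ‖p‖_E ≤ 1 }`. -/
def greenV (E : Set ℂ) (z : ℂ) : ℝ :=
  sSup {t : ℝ | ∃ m : ℕ, 1 ≤ m ∧ ∃ p : Polynomial ℂ, p.natDegree ≤ m ∧
    (∀ ζ ∈ E, ‖p.eval ζ‖ ≤ 1) ∧ t = Real.log ‖p.eval z‖ / m}

/-- The Green extremal function `V*(z,E)`: the upper semicontinuous regularization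
`V*(z,E) = limsup_{z' → z} V(z',E)`. -/
def greenVstar (E : Set ℂ) (z : ℂ) : ℝ :=
  Filter.limsup (greenV E) (nhds z)

/-- The sup-norm `‖p‖_E = sup_{z ∈ E} |p(z)|` of a polynomial on a set `E ⊆ ℂ`. -/
def polySup (p : Polynomial ℂ) (E : Set ℂ) : ℝ :=
  sSup ((fun z => ‖p.eval z‖) '' E)

/-- Sadullaev's `τ`-capacity:
`τ(A, U(0,r)) = exp(−max_{z ∈ closure U(0,r)} V*(z, A))`. -/
def tauCap (A : Set ℂ) (r : ℝ) : ℝ :=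
  Real.exp (-(sSup (greenVstar A '' closedBall (0 : ℂ) r)))


def mmr (r : ℝ) (p : Polynomial ℂ) : ℝ :=
  (p.comp (Polynomial.C (r : ℂ) * Polynomial.X)).mahlerMeasure

theorem mmr_lower {r : ℝ} (hr : 0 < r) {p : Polynomial ℂ} {n : ℕ} (hp : p.natDegree ≤ n)
    {z : ℂ} (hz : z ∈ closedBall (0 : ℂ) r) : ‖p.eval z‖ ≤ 2 ^ n * mmr r p := by
  set q := p.comp (Polynomial.C (r : ℂ) * Polynomial.X) with hq
  have hrc : (r : ℂ) ≠ 0 := by exact_mod_cast hr.ne'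
  have hqd : q.natDegree ≤ n := by
    refine (Polynomial.natDegree_comp_le).trans ?_
    have : (Polynomial.C (r : ℂ) * Polynomial.X).natDegree ≤ 1 :=
      (Polynomial.natDegree_C_mul_le _ _).trans Polynomial.natDegree_X_le
    nlinarith
  have hpe : p.eval z = q.eval (z / r) := by
    simp [hq, mul_div_cancel₀ _ hrc]
  have hw : ‖z / (r : ℂ)‖ ≤ 1 := by
    rw [norm_div, Complex.norm_real, Real.norm_of_nonneg hr.le, div_le_one hr]
    simpa using hz
  have hM : 0 ≤ q.mahlerMeasure := q.mahlerMeasure_nonneg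
  rw [hpe, Polynomial.eval_eq_sum_range]
  calc ‖∑ i ∈ Finset.range (q.natDegree + 1), q.coeff i * (z / r) ^ i‖
      ≤ ∑ i ∈ Finset.range (q.natDegree + 1), (q.natDegree.choose i : ℝ) * q.mahlerMeasure := by
        refine norm_sum_le_of_le _ fun i _ => ?_
        rw [norm_mul, norm_pow]
        calc ‖q.coeff i‖ * ‖z / (r : ℂ)‖ ^ i ≤ ‖q.coeff i‖ * 1 := by
              gcongr
              exact pow_le_one₀ (norm_nonneg _) hw
          _ ≤ _ := by
              rw [mul_one]
              exact q.norm_coeff_le_choose_mul_mahlerMeasure i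
    _ = 2 ^ q.natDegree * q.mahlerMeasure := by
        rw [← Finset.sum_mul]
        congr 1
        exact_mod_cast Nat.sum_range_choose q.natDegree
    _ ≤ 2 ^ n * mmr r p := by
        unfold mmr
        gcongr
        norm_num

theorem mahler_le_one {q : Polynomial ℂ} (h : ∀ z, ‖z‖ = 1 → ‖q.eval z‖ ≤ 1) :
    q.mahlerMeasure ≤ 1 := by
  by_cases hq : q = 0
  · simp [hq]
  rw [Polynomial.mahlerMeasure, if_pos hq, Polynomial.logMahlerMeasure_def]
  rw [Real.exp_le_one_iff]
  apply Real.circleAverage_mono_on_of_le_circle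
  · apply MeromorphicOn.circleIntegrable_log_norm
    intro z _
    have : AnalyticAt ℂ (fun x => q.eval x) z := by
      simpa using AnalyticAt.aeval_polynomial (analyticAt_id (𝕜 := ℂ) (z := z)) q
    exact this.meromorphicAt
  · intro z hz
    apply Real.log_nonpos (norm_nonneg _)
    apply h
    simpa using hz

theorem mmr_upper {r : ℝ} (hr : 0 < r) (p : Polynomial ℂ) :
    ∃ z ∈ closedBall (0 : ℂ) r, mmr r p ≤ ‖p.eval z‖ := by
  obtain ⟨z, hz, hmax⟩ := (isCompact_closedBall (0 : ℂ) r).exists_isMaxOn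
    ⟨0, by simp [hr.le]⟩ (f := fun z => ‖p.eval z‖) (by fun_prop)
  refine ⟨z, hz, ?_⟩
  have hmax' : ∀ w ∈ closedBall (0 : ℂ) r, ‖p.eval w‖ ≤ ‖p.eval z‖ := fun w hw => hmax hw
  rcases (norm_nonneg (p.eval z)).eq_or_lt with h0 | hpos
  · have := mmr_lower hr (p := p) le_rfl hz
    have hp : p = 0 := by
      apply Polynomial.eq_zero_of_infinite_isRoot
      refine Set.Infinite.mono (s := closedBall (0 : ℂ) r) ?_ ?_
      · intro w hw
        have := hmax' w hw
        rw [← h0] at this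
        simpa using this
      · exact infinite_of_mem_nhds (0 : ℂ) (closedBall_mem_nhds _ hr)
    simp [mmr, hp]
  · have h1 := mahler_le_one (q := Polynomial.C ((‖p.eval z‖ : ℂ)⁻¹) *
      p.comp (Polynomial.C (r : ℂ) * Polynomial.X)) (by
        intro w hw
        simp only [Polynomial.eval_mul, Polynomial.eval_C, Polynomial.eval_comp,
          Polynomial.eval_X, norm_mul, norm_inv, Complex.norm_real, norm_norm]
        rw [inv_mul_le_iff₀ hpos, mul_one]
        apply hmax'
        simp [hw, abs_of_pos hr])
    rw [Polynomial.mahlerMeasure_mul, Polynomial.mahlerMeasure_const] at h1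
    simp only [norm_inv, Complex.norm_real, norm_norm] at h1
    rw [inv_mul_le_iff₀ hpos, mul_one] at h1
    exact h1

theorem mmr_mul (r : ℝ) (p q : Polynomial ℂ) : mmr r (p * q) = mmr r p * mmr r q := by
  simp [mmr, Polynomial.mahlerMeasure_mul]

theorem mmr_pow (r : ℝ) (p : Polynomial ℂ) (k : ℕ) : mmr r (p ^ k) = mmr r p ^ k := by
  induction k with
  | zero => simp [mmr]
  | succ k ih => rw [pow_succ, mmr_mul, ih, pow_succ]

theorem mmr_nonneg (r : ℝ) (p : Polynomial ℂ) : 0 ≤ mmr r p :=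
  Polynomial.mahlerMeasure_nonneg _

theorem bernstein_walsh {r : ℝ} (hr : 0 < r) {p : Polynomial ℂ} {n : ℕ} (hp : p.natDegree ≤ n)
    {B : ℝ} (hB : ∀ z ∈ closedBall (0 : ℂ) r, ‖p.eval z‖ ≤ B) (z : ℂ) :
    ‖p.eval z‖ ≤ B * max 1 (‖z‖ / r) ^ n := by
  have hB0 : 0 ≤ B := (norm_nonneg _).trans (hB 0 (by simp [hr.le]))
  by_cases hz : ‖z‖ ≤ r
  · refine (hB z (by simpa using hz)).trans ?_
    exact le_mul_of_one_le_right hB0 (one_le_pow₀ (le_max_left _ _))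
  push Not at hz
  have hz0 : 0 < ‖z‖ := hr.trans hz
  have key : ∀ w : ℂ, w ≠ 0 → ‖(Polynomial.reflect n p).eval w⁻¹‖ * ‖w‖ ^ n = ‖p.eval w‖ := by
    intro w hw
    let _ := invertibleOfNonzero hw
    have := Polynomial.eval₂_reflect_mul_pow (RingHom.id ℂ) w n p hp
    rw [invOf_eq_inv] at this
    rw [Polynomial.eval, Polynomial.eval, ← this, norm_mul, norm_pow]
  have hmp : ‖(Polynomial.reflect n p).eval z⁻¹‖ ≤ B / r ^ n := by
    refine Complex.norm_le_of_forall_mem_frontier_norm_le (U := ball (0 : ℂ) r⁻¹) isBounded_ball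
      (f := fun w => (Polynomial.reflect n p).eval w)
      (Polynomial.differentiable _).diffContOnCl ?_ ?_
    · intro w hw
      rw [frontier_ball _ (inv_pos.2 hr).ne', mem_sphere_zero_iff_norm] at hw
      have hw0 : w ≠ 0 := by
        intro h; rw [h, norm_zero] at hw; exact (inv_pos.2 hr).ne hw
      have h := key w⁻¹ (inv_ne_zero hw0)
      rw [inv_inv, norm_inv, hw, inv_inv] at h
      rw [le_div_iff₀ (pow_pos hr n), h]
      apply hB
      simp [hw]
    · rw [closure_ball _ (inv_pos.2 hr).ne', mem_closedBall_zero_iff, norm_inv]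
      exact inv_anti₀ hr hz.le
  rw [← key z (norm_pos_iff.1 hz0)]
  have hmx : max 1 (‖z‖ / r) = ‖z‖ / r := max_eq_right ((one_le_div hr).2 hz.le)
  rw [hmx, div_pow]
  calc _ ≤ B / r ^ n * ‖z‖ ^ n := by gcongr
    _ = _ := by ring

theorem domination {Q : Polynomial ℂ} {D : ℕ} {c : ℂ} {r : ℝ} (hr : 0 < r) {h : ℂ → ℝ}
    (hc : ContinuousOn h (closedBall c r))
    (hF : ∃ F : ℂ → ℂ, DifferentiableOn ℂ F (ball c r) ∧ ∀ z ∈ ball c r, h z = (F z).re)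
    (hs : ∀ z ∈ sphere c r, ‖Q.eval z‖ ≤ Real.exp (D * h z)) :
    ∀ z ∈ closedBall c r, ‖Q.eval z‖ ≤ Real.exp (D * h z) := by
  obtain ⟨F, hFd, hFh⟩ := hF
  set g : ℂ → ℝ := fun z => ‖Q.eval z‖ * Real.exp (-(D * h z)) with hg
  have hgc : ContinuousOn g (closedBall c r) := by
    apply ContinuousOn.mul
    · fun_prop
    · exact Real.continuous_exp.comp_continuousOn (continuousOn_const.mul hc).neg
  have hgs : ∀ z, g z ≤ 1 ↔ ‖Q.eval z‖ ≤ Real.exp (D * h z) := by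
    intro z
    rw [hg]
    simp only
    rw [Real.exp_neg, mul_inv_le_iff₀ (Real.exp_pos _), one_mul]
  obtain ⟨w, hw, hmax⟩ := (isCompact_closedBall c r).exists_isMaxOn
    ⟨c, by simp [hr.le]⟩ hgc
  have hmax' : ∀ x ∈ closedBall c r, g x ≤ g w := fun x hx => hmax hx
  suffices hw1 : g w ≤ 1 from fun z hz => (hgs z).1 ((hmax' z hz).trans hw1)
  by_cases hwb : w ∈ ball c r
  · set f : ℂ → ℂ := fun z => Q.eval z * Complex.exp (-(D * F z)) with hf
    have hfd : DifferentiableOn ℂ f (ball c r) := by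
      apply DifferentiableOn.mul
      · exact Q.differentiable.differentiableOn
      · exact ((hFd.const_mul _).neg).cexp
    have hfg : ∀ z ∈ ball c r, ‖f z‖ = g z := by
      intro z hz
      rw [hf, hg]
      simp [Complex.norm_exp, hFh z hz]
    have heq := Complex.norm_eqOn_of_isPreconnected_of_isMaxOn
      (convex_ball c r).isPreconnected isOpen_ball hfd hwb (by
        intro x hx
        simp only [Function.comp, Set.mem_ofPred_eq, hfg x hx, hfg w hwb]
        exact hmax' x (ball_subset_closedBall hx))
    have heq2 : Set.EqOn g (fun _ => g w) (ball c r) := by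
      intro x hx
      have := heq hx
      simp only [Function.comp, Function.const, hfg x hx, hfg w hwb] at this
      exact this
    have heq3 : Set.EqOn g (fun _ => g w) (closedBall c r) :=
      heq2.of_subset_closure hgc continuousOn_const ball_subset_closedBall
        (closure_ball c hr.ne').ge
    have hmem : c + r ∈ sphere c r := by simp [hr.le]
    have h3 : g (c + r) = g w := heq3 (sphere_subset_closedBall hmem)
    rw [← h3]
    exact (hgs _).2 (hs _ hmem)
  · refine (hgs _).2 (hs w ?_)
    rw [mem_ball, not_lt] at hwb
    rw [mem_closedBall] at hw
    exact le_antisymm hw hwb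

theorem dini_aux {H : ℕ → ℂ → ℝ} (hH : ∀ N, Continuous (H N))
    (hanti : ∀ N z, H (N + 1) z ≤ H N z) {K : Set ℂ} (hK : IsCompact K) {f : ℂ → ℝ}
    (hf : ContinuousOn f K) (hne : ∀ N, ∃ z ∈ K, f z ≤ H N z) :
    ∃ z ∈ K, ∀ N, f z ≤ H N z := by
  have hcl : ∀ N, IsClosed {z | z ∈ K ∧ f z ≤ H N z} := fun N =>
    hK.isClosed.isClosed_le hf (hH N).continuousOn
  obtain ⟨z, hz⟩ := IsCompact.nonempty_iInter_of_sequence_nonempty_isCompact_isClosed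
    (fun N => {z | z ∈ K ∧ f z ≤ H N z})
    (fun N z hz => ⟨hz.1, hz.2.trans (hanti N z)⟩)
    (fun N => hne N)
    (hK.of_isClosed_subset (hcl 0) (fun z hz => hz.1)) hcl
  rw [Set.mem_iInter] at hz
  exact ⟨z, (hz 0).1, fun N => (hz N).2⟩

def gfun (q : ℕ → Polynomial ℂ) (n : ℕ → ℕ) (j : ℕ) (z : ℂ) : ℝ :=
  ‖(q j).eval z‖ ^ (1 / ((n j * 2 ^ j : ℕ) : ℝ))

def Gfun (q : ℕ → Polynomial ℂ) (n : ℕ → ℕ) (N : ℕ) (z : ℂ) : ℝ :=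
  ∏ j ∈ Finset.range N, gfun q n j z

def Hfun (r : ℝ) (q : ℕ → Polynomial ℂ) (n : ℕ → ℕ) (N : ℕ) (z : ℂ) : ℝ :=
  Gfun q n N z * max 1 (‖z‖ / r) ^ (2 * (1 / 2 : ℝ) ^ N)

theorem gfun_nonneg (q : ℕ → Polynomial ℂ) (n : ℕ → ℕ) (j : ℕ) (z : ℂ) : 0 ≤ gfun q n j z :=
  Real.rpow_nonneg (norm_nonneg _) _

theorem Gfun_nonneg (q : ℕ → Polynomial ℂ) (n : ℕ → ℕ) (j : ℕ) (z : ℂ) : 0 ≤ Gfun q n j z :=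
  Finset.prod_nonneg fun _ _ => gfun_nonneg _ _ _ _

theorem Hfun_nonneg (r : ℝ) (q : ℕ → Polynomial ℂ) (n : ℕ → ℕ) (j : ℕ) (z : ℂ) :
    0 ≤ Hfun r q n j z :=
  mul_nonneg (Gfun_nonneg _ _ _ _) (Real.rpow_nonneg (zero_le_one.trans (le_max_left _ _)) _)

theorem Hfun_continuous (r : ℝ) (q : ℕ → Polynomial ℂ) (n : ℕ → ℕ) (N : ℕ) :
    Continuous (Hfun r q n N) := by
  unfold Hfun
  apply Continuous.mul
  · unfold Gfun
    refine continuous_finsetProd _ fun j _ => ?_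
    unfold gfun
    refine Continuous.rpow_const (by fun_prop) fun z => Or.inr (by positivity)
  · refine Continuous.rpow_const (by fun_prop) fun z => Or.inr (by positivity)

theorem Hfun_anti {r : ℝ} (hr : 0 < r) {q : ℕ → Polynomial ℂ} {n : ℕ → ℕ}
    (hn : ∀ j, 1 ≤ n j) (hd : ∀ j, (q j).natDegree ≤ n j)
    (hq : ∀ j, ∀ z ∈ closedBall (0 : ℂ) r, ‖(q j).eval z‖ ≤ 1) (N : ℕ) (z : ℂ) :
    Hfun r q n (N + 1) z ≤ Hfun r q n N z := by
  have hm : (1 : ℝ) ≤ max 1 (‖z‖ / r) := le_max_left _ _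
  have hm0 : (0 : ℝ) < max 1 (‖z‖ / r) := zero_lt_one.trans_le hm
  have hbw := bernstein_walsh hr (hd N) (hq N) z
  rw [one_mul] at hbw
  have hg : gfun q n N z ≤ max 1 (‖z‖ / r) ^ ((1 / 2 : ℝ) ^ N) := by
    unfold gfun
    refine (Real.rpow_le_rpow (norm_nonneg _) hbw (by positivity)).trans ?_
    rw [← Real.rpow_natCast, ← Real.rpow_mul hm0.le]
    apply le_of_eq
    congr 1
    have : (n N : ℝ) ≠ 0 := by have := hn N; positivity
    push_cast
    field_simp
    rw [← mul_pow]; norm_num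
  have hsplit : max 1 (‖z‖ / r) ^ (2 * (1 / 2 : ℝ) ^ N) =
      max 1 (‖z‖ / r) ^ ((1 / 2 : ℝ) ^ N) * max 1 (‖z‖ / r) ^ (2 * (1 / 2 : ℝ) ^ (N + 1)) := by
    rw [← Real.rpow_add hm0]
    congr 1
    ring
  unfold Hfun
  rw [hsplit, Gfun, Finset.prod_range_succ, ← Gfun, mul_assoc]
  have := Gfun_nonneg q n N z
  gcongr

theorem Gfun_struct {r : ℝ} {q : ℕ → Polynomial ℂ} {n : ℕ → ℕ}
    (hn : ∀ j, 1 ≤ n j)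
    (hmm : ∀ j, 1 ≤ 2 ^ (n j) * mmr r (q j)) (N : ℕ) :
    ∃ D k : ℕ, 1 ≤ k ∧ D = 2 ^ N * k ∧ ∃ Q : Polynomial ℂ,
      (∀ z, Gfun q n N z ^ D = ‖Q.eval z‖) ∧ 4 ^ k ≤ mmr r Q * 4 ^ D := by
  induction N with
  | zero => exact ⟨1, 1, le_rfl, by simp, 1, by simp [Gfun], by simp [mmr]⟩
  | succ N ih =>
    obtain ⟨D, k, hk, hD, Q, hQ, hM⟩ := ih
    set d := n N * 2 ^ N with hd
    have hd1 : d ≠ 0 := by have := hn N; positivity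
    refine ⟨D * (2 * d), k * d, ?_, ?_, Q ^ (2 * d) * (q N) ^ (2 * D), ?_, ?_⟩
    · exact Nat.one_le_iff_ne_zero.2 (mul_ne_zero (by omega) hd1)
    · rw [hD]; ring
    · intro z
      rw [Gfun, Finset.prod_range_succ, ← Gfun, mul_pow, pow_mul, hQ, Polynomial.eval_mul,
        Polynomial.eval_pow, Polynomial.eval_pow, norm_mul, norm_pow, norm_pow]
      congr 1
      have h1 : gfun q n N z ^ d = ‖(q N).eval z‖ := by
        unfold gfun
        rw [← hd, one_div, Real.rpow_inv_natCast_pow (norm_nonneg _) hd1]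
      rw [show D * (2 * d) = d * (2 * D) by ring, pow_mul, h1]
    · rw [mmr_mul, mmr_pow, mmr_pow]
      have h1 : (4 ^ k : ℝ) ^ (2 * d) ≤ (mmr r Q * 4 ^ D) ^ (2 * d) :=
        pow_le_pow_left₀ (by positivity) hM _
      have h2 : 1 ≤ (2 ^ (n N) * mmr r (q N)) ^ (2 * D) := one_le_pow₀ (hmm N)
      have h3 : (2 ^ (n N) * mmr r (q N)) ^ (2 * D) = 4 ^ (k * d) * mmr r (q N) ^ (2 * D) := by
        rw [mul_pow, ← pow_mul, show (4 : ℝ) = 2 ^ 2 by norm_num, ← pow_mul]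
        congr 2
        rw [hD, hd]; ring
      have h4 : (4 ^ k : ℝ) ^ (2 * d) = 4 ^ (k * d) * 4 ^ (k * d) := by
        rw [← pow_mul, ← pow_add]; congr 1; ring
      have h5 : (mmr r Q * 4 ^ D) ^ (2 * d) = mmr r Q ^ (2 * d) * 4 ^ (D * (2 * d)) := by
        rw [mul_pow, ← pow_mul]
      have hpos : (0 : ℝ) < 4 ^ (k * d) := by positivity
      rw [h3] at h2
      rw [h4, h5] at h1
      have hA : 0 ≤ mmr r Q ^ (2 * d) * 4 ^ (D * (2 * d)) := by
        have := mmr_nonneg r Q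
        positivity
      have h6 : (4 : ℝ) ^ (k * d) * 4 ^ (k * d) ≤
          (mmr r Q ^ (2 * d) * 4 ^ (D * (2 * d))) * (4 ^ (k * d) * mmr r (q N) ^ (2 * D)) :=
        h1.trans (le_mul_of_one_le_right hA h2)
      refine le_of_mul_le_mul_left (h6.trans_eq ?_) hpos
      ring

theorem Hfun_dom {r : ℝ} (hr : 0 < r) {q : ℕ → Polynomial ℂ} {n : ℕ → ℕ}
    (hn : ∀ j, 1 ≤ n j)
    (hmm : ∀ j, 1 ≤ 2 ^ (n j) * mmr r (q j)) (N : ℕ) {c : ℂ} {s : ℝ} (hs : 0 < s) {h : ℂ → ℝ}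
    (hc : ContinuousOn h (closedBall c s))
    (hF : ∃ F : ℂ → ℂ, DifferentiableOn ℂ F (ball c s) ∧ ∀ z ∈ ball c s, h z = (F z).re)
    (hsp : ∀ z ∈ sphere c s, Hfun r q n N z ≤ Real.exp (h z)) :
    ∀ z ∈ closedBall c s, Hfun r q n N z ≤ Real.exp (h z) := by
  obtain ⟨D, k, hk, hD, Q, hQ, -⟩ := Gfun_struct hn hmm N
  have hD0 : D ≠ 0 := by rw [hD]; positivity
  have hrc : (r : ℂ) ≠ 0 := by exact_mod_cast hr.ne'
  set Q2 : Polynomial ℂ := Q * (Polynomial.C ((r : ℂ)⁻¹) * Polynomial.X) ^ (2 * k) with hQ2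
  have hQ2e : ∀ z, ‖Q2.eval z‖ = ‖Q.eval z‖ * (‖z‖ / r) ^ (2 * k) := by
    intro z
    rw [hQ2]
    simp [abs_of_pos hr]
    left
    ring
  have hHD : ∀ z, Hfun r q n N z ^ D = ‖Q.eval z‖ * max 1 (‖z‖ / r) ^ (2 * k) := by
    intro z
    have hm0 : (0 : ℝ) < max 1 (‖z‖ / r) := zero_lt_one.trans_le (le_max_left _ _)
    rw [Hfun, mul_pow, hQ, ← Real.rpow_natCast (_ ^ _), ← Real.rpow_mul hm0.le,
      ← Real.rpow_natCast _ (2 * k)]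
    congr 2
    rw [hD]
    push_cast
    rw [one_div, inv_pow]
    field_simp
  have hexp : ∀ z, Hfun r q n N z ≤ Real.exp (h z) ↔
      Hfun r q n N z ^ D ≤ Real.exp (D * h z) := by
    intro z
    rw [Real.exp_nat_mul]
    exact (pow_le_pow_iff_left₀ (Hfun_nonneg _ _ _ _ _) (Real.exp_pos _).le hD0).symm
  have hmax : ∀ z, Hfun r q n N z ^ D = max ‖Q.eval z‖ ‖Q2.eval z‖ := by
    intro z
    rw [hHD, hQ2e]
    rcases le_total (‖z‖ / r) 1 with h1 | h1
    · rw [max_eq_left h1, one_pow, mul_one, max_eq_left]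
      exact mul_le_of_le_one_right (norm_nonneg _) (pow_le_one₀ (by positivity) h1)
    · rw [max_eq_right h1, max_eq_right]
      exact le_mul_of_one_le_right (norm_nonneg _) (one_le_pow₀ h1)
  have hsp' : ∀ z ∈ sphere c s, ‖Q.eval z‖ ≤ Real.exp (D * h z) ∧
      ‖Q2.eval z‖ ≤ Real.exp (D * h z) := by
    intro z hz
    have := (hexp z).1 (hsp z hz)
    rw [hmax] at this
    exact max_le_iff.1 this
  intro z hz
  rw [hexp, hmax]
  exact max_le (domination hs hc hF (fun w hw => (hsp' w hw).1) z hz)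
    (domination hs hc hF (fun w hw => (hsp' w hw).2) z hz)

theorem polar_of_seq {A : Set ℂ} {r : ℝ} (hr : 0 < r) (hA : A ⊆ ball (0 : ℂ) r)
    {q : ℕ → Polynomial ℂ} {n : ℕ → ℕ}
    (hn : ∀ j, 1 ≤ n j) (hd : ∀ j, (q j).natDegree ≤ n j)
    (hq : ∀ j, ∀ z ∈ closedBall (0 : ℂ) r, ‖(q j).eval z‖ ≤ 1)
    (hmm : ∀ j, 1 ≤ 2 ^ (n j) * mmr r (q j))
    (hqA : ∀ j, ∀ z ∈ A, ‖(q j).eval z‖ ≤ Real.exp (-((n j * 2 ^ j : ℕ) : ℝ))) :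
    PolarSet A := by
  have hanti := Hfun_anti hr hn hd hq
  have hcont := Hfun_continuous r q n
  set L : ℕ → ℂ → EReal := fun N z => ENNReal.log (ENNReal.ofReal (Hfun r q n N z)) with hL
  have hLle : ∀ N z (x : ℝ), L N z ≤ (x : EReal) ↔ Hfun r q n N z ≤ Real.exp x := by
    intro N z x
    have : (x : EReal) = ENNReal.log (ENNReal.ofReal (Real.exp x)) := by
      rw [ENNReal.log_ofReal_of_pos (Real.exp_pos _), Real.log_exp]
    rw [hL, this]
    simp only [ENNReal.log_le_log_iff]
    rw [ENNReal.ofReal_le_ofReal_iff (Real.exp_pos _).le]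
  refine ⟨fun z => ⨅ N, L N z, ⟨?_, ?_, ?_⟩, ?_, ?_⟩
  · apply upperSemicontinuous_iInf
    intro N
    apply Continuous.upperSemicontinuous
    exact ENNReal.continuous_log.comp (ENNReal.continuous_ofReal.comp (hcont N))
  · intro z
    refine ne_of_lt (lt_of_le_of_lt (iInf_le _ 0) ?_)
    exact ENNReal.log_lt_top_iff.2 ENNReal.ofReal_lt_top
  · intro c s hs h hc hF hsp z hz
    apply EReal.le_of_forall_lt_iff_le.1
    intro x hx
    rw [EReal.coe_lt_coe_iff] at hx
    set ε := x - h z with hε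
    have hε0 : 0 < ε := by linarith
    have hex : ∃ N, ∀ w ∈ sphere c s, Hfun r q n N w ≤ Real.exp (h w + ε) := by
      by_contra! hcon
      obtain ⟨w, hw, hwN⟩ := dini_aux hcont hanti (isCompact_sphere c s)
        (f := fun w => Real.exp (h w + ε))
        (Real.continuous_exp.comp_continuousOn
          ((hc.mono sphere_subset_closedBall).add continuousOn_const))
        (fun N => by
          obtain ⟨w, hw, hlt⟩ := hcon N
          exact ⟨w, hw, hlt.le⟩)
      have h1 : ((h w + ε / 2 : ℝ) : EReal) ≤ ⨅ N, L N w := by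
        apply le_iInf
        intro N
        by_contra! hlt
        have := (hLle N w _).1 hlt.le
        have h3 := (hwN N).trans this
        rw [Real.exp_le_exp] at h3
        linarith
      have h2 := h1.trans (hsp w hw)
      rw [EReal.coe_le_coe_iff] at h2
      linarith
    obtain ⟨N, hN⟩ := hex
    have hF' : ∃ F : ℂ → ℂ, DifferentiableOn ℂ F (ball c s) ∧
        ∀ z ∈ ball c s, h z + ε = (F z).re := by
      obtain ⟨F, hF1, hF2⟩ := hF
      refine ⟨fun z => F z + (ε : ℂ), hF1.add_const _, fun z hz => ?_⟩
      simp [hF2 z hz]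
    have := Hfun_dom hr hn hmm N hs (h := fun w => h w + ε) (hc.add continuousOn_const) hF' hN z hz
    rw [show x = h z + ε by rw [hε]; ring]
    exact (iInf_le _ N).trans ((hLle N z _).2 this)
  · obtain ⟨z, hz, hzN⟩ := dini_aux hcont hanti (isCompact_closedBall (0 : ℂ) r)
      (f := fun _ => 1 / 4) continuousOn_const (fun N => by
        obtain ⟨D, k, hk, hD, Q, hQ, hM⟩ := Gfun_struct hn hmm N
        have hD0 : D ≠ 0 := by rw [hD]; positivity
        obtain ⟨z, hz, hzQ⟩ := mmr_upper hr Q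
        refine ⟨z, hz, ?_⟩
        have h1 : (1 / 4 : ℝ) ^ D ≤ Gfun q n N z ^ D := by
          rw [hQ, one_div, inv_pow]
          refine le_trans ?_ hzQ
          rw [inv_le_iff_one_le_mul₀ (by positivity)]
          refine le_trans ?_ hM
          exact one_le_pow₀ (by norm_num)
        have h2 := (pow_le_pow_iff_left₀ (by norm_num) (Gfun_nonneg _ _ _ _) hD0).1 h1
        refine h2.trans ?_
        unfold Hfun
        exact le_mul_of_one_le_right (Gfun_nonneg _ _ _ _)
          (Real.one_le_rpow (le_max_left _ _) (by positivity)))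
    refine ⟨z, ?_⟩
    have : ((Real.log (1 / 4) : ℝ) : EReal) ≤ ⨅ N, L N z := by
      apply le_iInf
      intro N
      rw [← ENNReal.log_ofReal_of_pos (by norm_num)]
      exact ENNReal.log_le_log (ENNReal.ofReal_le_ofReal (hzN N))
    intro hbot
    simp only [hbot] at this
    exact EReal.coe_ne_bot _ (le_bot_iff.1 this)
  · intro z hz
    have hb : ∀ N : ℕ, L N z ≤ ((-(N : ℝ) : ℝ) : EReal) := by
      intro N
      rw [hLle]
      have hzr : ‖z‖ / r ≤ 1 := by
        have := hA hz
        rw [mem_ball_zero_iff] at this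
        rw [div_le_one hr]; exact this.le
      rw [Hfun, max_eq_left hzr, Real.one_rpow, mul_one, Gfun]
      have hg : ∀ j ∈ Finset.range N, gfun q n j z ≤ Real.exp (-1) := by
        intro j _
        unfold gfun
        have hdj : ((n j * 2 ^ j : ℕ) : ℝ) ≠ 0 := by have := hn j; positivity
        refine (Real.rpow_le_rpow (norm_nonneg _) (hqA j z hz) (by positivity)).trans ?_
        rw [← Real.exp_mul, neg_mul, mul_one_div_cancel hdj]
      refine (Finset.prod_le_prod (fun j _ => gfun_nonneg _ _ _ _) hg).trans ?_
      rw [Finset.prod_const, Finset.card_range, ← Real.exp_nat_mul]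
      simp
    apply le_bot_iff.1
    apply EReal.le_of_forall_lt_iff_le.1
    intro x _
    obtain ⟨N, hN⟩ := exists_nat_gt (-x)
    refine (iInf_le _ N).trans ((hb N).trans ?_)
    rw [EReal.coe_le_coe_iff]
    linarith

theorem nonpolar_bound {A : Set ℂ} {r : ℝ} (hr : 0 < r) (hA : A ⊆ ball (0 : ℂ) r)
    (hpol : ¬ PolarSet A) : ∃ M : ℝ, ∀ n : ℕ, 1 ≤ n → ∀ p : Polynomial ℂ, p.natDegree ≤ n →
      (∀ ζ ∈ A, ‖p.eval ζ‖ ≤ 1) → ∀ z ∈ closedBall (0 : ℂ) r, ‖p.eval z‖ ≤ Real.exp (n * M) := by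
  by_contra! hcon
  apply hpol
  have hex : ∀ j : ℕ, ∃ n : ℕ, ∃ q : Polynomial ℂ, 1 ≤ n ∧ q.natDegree ≤ n ∧
      (∀ z ∈ closedBall (0 : ℂ) r, ‖q.eval z‖ ≤ 1) ∧ 1 ≤ 2 ^ n * mmr r q ∧
      ∀ z ∈ A, ‖q.eval z‖ ≤ Real.exp (-((n * 2 ^ j : ℕ) : ℝ)) := by
    intro j
    obtain ⟨n, hn, p, hp, hpA, z, hz, hlt⟩ := hcon (2 ^ j)
    obtain ⟨w, hw, hmax⟩ := (isCompact_closedBall (0 : ℂ) r).exists_isMaxOn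
      ⟨0, by simp [hr.le]⟩ (f := fun z => ‖p.eval z‖) (by fun_prop)
    have hmax' : ∀ x ∈ closedBall (0 : ℂ) r, ‖p.eval x‖ ≤ ‖p.eval w‖ := fun x hx => hmax hx
    have hbig : Real.exp (n * 2 ^ j) < ‖p.eval w‖ := hlt.trans_le (hmax' z hz)
    have hpos : 0 < ‖p.eval w‖ := (Real.exp_pos _).trans hbig
    set q : Polynomial ℂ := Polynomial.C ((‖p.eval w‖ : ℂ)⁻¹) * p with hq
    have hqe : ∀ x, ‖q.eval x‖ = ‖p.eval w‖⁻¹ * ‖p.eval x‖ := by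
      intro x
      rw [hq]
      simp
    have hqd : q.natDegree ≤ n := (Polynomial.natDegree_C_mul_le _ _).trans hp
    refine ⟨n, q, hn, hqd, ?_, ?_, ?_⟩
    · intro x hx
      rw [hqe, inv_mul_le_iff₀ hpos, mul_one]
      exact hmax' x hx
    · have := mmr_lower hr hqd hw
      rwa [hqe, inv_mul_cancel₀ hpos.ne'] at this
    · intro x hx
      rw [hqe, Real.exp_neg]
      push_cast
      calc ‖p.eval w‖⁻¹ * ‖p.eval x‖ ≤ ‖p.eval w‖⁻¹ * 1 := by
            gcongr
            exact hpA x hx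
        _ ≤ _ := by
            rw [mul_one]
            exact inv_anti₀ (Real.exp_pos _) hbig.le
  choose n q h1 h2 h3 h4 h5 using hex
  exact polar_of_seq hr hA h1 h2 h3 h4 h5

theorem polySup_bdd (p : Polynomial ℂ) {E : Set ℂ} {r : ℝ} (hE : E ⊆ closedBall (0 : ℂ) r) :
    BddAbove ((fun z => ‖p.eval z‖) '' E) :=
  ((isCompact_closedBall (0 : ℂ) r).bddAbove_image (f := fun z => ‖p.eval z‖)
    (by fun_prop)).mono (Set.image_mono hE)

theorem le_polySup (p : Polynomial ℂ) {E : Set ℂ} {r : ℝ} (hE : E ⊆ closedBall (0 : ℂ) r)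
    {z : ℂ} (hz : z ∈ E) : ‖p.eval z‖ ≤ polySup p E :=
  le_csSup (polySup_bdd p hE) ⟨z, hz, rfl⟩

theorem polySup_le {p : Polynomial ℂ} {E : Set ℂ} {B : ℝ} (hB : 0 ≤ B)
    (h : ∀ z ∈ E, ‖p.eval z‖ ≤ B) : polySup p E ≤ B := by
  apply Real.sSup_le _ hB
  rintro _ ⟨z, hz, rfl⟩
  exact h z hz

theorem polySup_nonneg (p : Polynomial ℂ) (E : Set ℂ) : 0 ≤ polySup p E := by
  apply Real.sSup_nonneg
  rintro _ ⟨z, hz, rfl⟩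
  exact norm_nonneg _

theorem polySup_C_mul (p : Polynomial ℂ) (E : Set ℂ) (a : ℂ) :
    polySup (Polynomial.C a * p) E = ‖a‖ * polySup p E := by
  unfold polySup
  rw [← smul_eq_mul (α := ℝ), ← Real.sSup_smul_of_nonneg (norm_nonneg a)]
  congr 1
  ext x
  simp [Set.mem_smul_set]

theorem le_polySup_closed (p : Polynomial ℂ) {r : ℝ} (hr : 0 < r)
    {z : ℂ} (hz : z ∈ closedBall (0 : ℂ) r) : ‖p.eval z‖ ≤ polySup p (ball (0 : ℂ) r) := by
  rw [← closure_ball (0 : ℂ) hr.ne'] at hz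
  refine le_on_closure (f := fun z => ‖p.eval z‖) (g := fun _ => polySup p (ball (0 : ℂ) r))
    (fun x hx => le_polySup p ball_subset_closedBall hx) (by fun_prop) (by fun_prop) hz

theorem exists_polySup (p : Polynomial ℂ) {r : ℝ} (hr : 0 < r) :
    ∃ z ∈ closedBall (0 : ℂ) r, ‖p.eval z‖ = polySup p (ball (0 : ℂ) r) := by
  obtain ⟨w, hw, hmax⟩ := (isCompact_closedBall (0 : ℂ) r).exists_isMaxOn
    ⟨0, by simp [hr.le]⟩ (f := fun z => ‖p.eval z‖) (by fun_prop)
  refine ⟨w, hw, le_antisymm (le_polySup_closed p hr hw) ?_⟩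
  exact polySup_le (norm_nonneg _) fun z hz => hmax (ball_subset_closedBall hz)

/-- For a compact set `A₀` of positive logarithmic capacity contained in the disk
`U(0,r)`, the Chebyshev-type polynomials `T_n` (of degree at most `n`, normalized by
`‖T_n‖_{U(0,r)} = 1`, minimizing `‖T_n‖_{A₀}`) satisfy
`lim_n ‖T_n‖_{A₀}^{1/n} = τ(A₀, U(0,r))` and `‖T_n‖_{A₀}^{1/n} ≥ τ(A₀, U(0,r))`
for every `n ≥ 1`. -/
theorem chebyshev_tau_capacity (A₀ : Set ℂ) (hA₀c : IsCompact A₀)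
    (hA₀pos : ¬ PolarSet A₀) (r : ℝ) (hr : 0 < r) (hsub : A₀ ⊆ ball (0 : ℂ) r)
    (T : ℕ → Polynomial ℂ) (hdeg : ∀ m, (T m).natDegree ≤ m)
    (hnorm : ∀ m, polySup (T m) (ball (0 : ℂ) r) = 1)
    (hmin : ∀ m, ∀ S : Polynomial ℂ, S.natDegree ≤ m →
      polySup S (ball (0 : ℂ) r) = 1 → polySup (T m) A₀ ≤ polySup S A₀) :
    Filter.Tendsto (fun m : ℕ => polySup (T m) A₀ ^ (1 / (m : ℝ))) Filter.atTop
      (nhds (tauCap A₀ r)) ∧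
    ∀ m : ℕ, 1 ≤ m → tauCap A₀ r ≤ polySup (T m) A₀ ^ (1 / (m : ℝ)) := by
  obtain ⟨M, hM⟩ := nonpolar_bound hr hsub hA₀pos
  have hsubc : A₀ ⊆ closedBall (0 : ℂ) r := hsub.trans ball_subset_closedBall
  set t : ℕ → ℝ := fun m => polySup (T m) A₀ with ht
  have ht0 : ∀ m, 0 ≤ t m := fun m => polySup_nonneg _ _
  have htA : ∀ m, ∀ z ∈ A₀, ‖(T m).eval z‖ ≤ t m := fun m z hz => le_polySup _ hsubc hz
  have ht1 : ∀ m, t m ≤ 1 := by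
    intro m
    refine polySup_le zero_le_one fun z hz => ?_
    rw [← hnorm m]
    exact le_polySup _ ball_subset_closedBall (hsub hz)
  have htlow : ∀ m : ℕ, 1 ≤ m → Real.exp (-(m * M)) ≤ t m := by
    intro m hm
    apply le_of_forall_pos_le_add
    intro ε hε
    have hpos : 0 < t m + ε := by linarith [ht0 m]
    obtain ⟨z, hz, hz1⟩ := exists_polySup (T m) hr
    rw [hnorm m] at hz1
    have := hM m hm (Polynomial.C (((t m + ε : ℝ) : ℂ)⁻¹) * T m)
      ((Polynomial.natDegree_C_mul_le _ _).trans (hdeg m)) (by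
        intro ζ hζ
        rw [Polynomial.eval_mul, Polynomial.eval_C, norm_mul, norm_inv, Complex.norm_real,
          Real.norm_of_nonneg hpos.le, inv_mul_le_iff₀ hpos, mul_one]
        linarith [htA m ζ hζ]) z hz
    rw [Polynomial.eval_mul, Polynomial.eval_C, norm_mul, norm_inv, Complex.norm_real,
      Real.norm_of_nonneg hpos.le, hz1, mul_one, inv_le_iff_one_le_mul₀ hpos] at this
    rw [Real.exp_neg, inv_le_iff_one_le_mul₀ (Real.exp_pos _)]
    linarith
  have htpos : ∀ m : ℕ, 1 ≤ m → 0 < t m := fun m hm => (Real.exp_pos _).trans_le (htlow m hm)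
  have hscale : ∀ m (p : Polynomial ℂ), p.natDegree ≤ m →
      polySup p (ball (0 : ℂ) r) * t m ≤ polySup p A₀ := by
    intro m p hp
    rcases (polySup_nonneg p (ball (0 : ℂ) r)).eq_or_lt with h0 | hpos
    · rw [← h0, zero_mul]; exact polySup_nonneg _ _
    · have h1 := hmin m (Polynomial.C ((polySup p (ball (0 : ℂ) r) : ℂ)⁻¹) * p)
        ((Polynomial.natDegree_C_mul_le _ _).trans hp) (by
          rw [polySup_C_mul, norm_inv, Complex.norm_real, Real.norm_of_nonneg hpos.le,
            inv_mul_cancel₀ hpos.ne'])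
      rw [polySup_C_mul, norm_inv, Complex.norm_real, Real.norm_of_nonneg hpos.le,
        le_inv_mul_iff₀ hpos] at h1
      exact h1
  have hpow : ∀ q k n, q * k ≤ n → t n ≤ t q ^ k := by
    intro q k n hqk
    have hd : (T q ^ k).natDegree ≤ n := by
      refine (Polynomial.natDegree_pow_le).trans (le_trans ?_ hqk)
      rw [mul_comm]
      exact Nat.mul_le_mul_right _ (hdeg q)
    obtain ⟨z, hz, hz1⟩ := exists_polySup (T q) hr
    rw [hnorm q] at hz1
    have h1 : 1 ≤ polySup (T q ^ k) (ball (0 : ℂ) r) := by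
      refine le_trans ?_ (le_polySup_closed (T q ^ k) hr hz)
      rw [Polynomial.eval_pow, norm_pow, hz1, one_pow]
    have h2 : polySup (T q ^ k) A₀ ≤ t q ^ k := by
      refine polySup_le (pow_nonneg (ht0 q) _) fun x hx => ?_
      rw [Polynomial.eval_pow, norm_pow]
      exact pow_le_pow_left₀ (norm_nonneg _) (htA q x hx) _
    exact (le_mul_of_one_le_left (ht0 n) h1).trans ((hscale n _ hd).trans h2)
  set L : ℕ → ℝ := fun m => -Real.log (t m) / m with hL
  have hL0 : ∀ m, 0 ≤ L m := fun m =>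
    div_nonneg (neg_nonneg.2 (Real.log_nonpos (ht0 m) (ht1 m))) (Nat.cast_nonneg _)
  have hLbdd : BddAbove (Set.range L) := by
    refine ⟨max M 0, ?_⟩
    rintro _ ⟨m, rfl⟩
    rcases Nat.eq_zero_or_pos m with h0 | hm
    · simp [hL, h0]
    · refine le_trans ?_ (le_max_left _ _)
      have hm' : (0 : ℝ) < m := by exact_mod_cast hm
      rw [hL]
      simp only
      rw [div_le_iff₀ hm']
      have := Real.log_le_log (Real.exp_pos _) (htlow m hm)
      rw [Real.log_exp] at this
      linarith
  set Sg : ℝ := ⨆ m, L m with hSg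
  have hLS : ∀ m, L m ≤ Sg := fun m => le_ciSup hLbdd m
  have hSg0 : 0 ≤ Sg := (hL0 0).trans (hLS 0)
  -- upper bound for every competitor
  have hub : ∀ z : ℂ, ∀ x ∈ {x : ℝ | ∃ m : ℕ, 1 ≤ m ∧ ∃ p : Polynomial ℂ, p.natDegree ≤ m ∧
      (∀ ζ ∈ A₀, ‖p.eval ζ‖ ≤ 1) ∧ x = Real.log ‖p.eval z‖ / m},
      x ≤ Sg + Real.log (max 1 (‖z‖ / r)) := by
    rintro z x ⟨m, hm, p, hp, hpA, rfl⟩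
    have hm' : (0 : ℝ) < m := by exact_mod_cast hm
    have hmx : (1 : ℝ) ≤ max 1 (‖z‖ / r) := le_max_left _ _
    have hmx0 : (0 : ℝ) < max 1 (‖z‖ / r) := zero_lt_one.trans_le hmx
    rcases (norm_nonneg (p.eval z)).eq_or_lt with h0 | hpos
    · rw [← h0, Real.log_zero, zero_div]
      exact add_nonneg hSg0 (Real.log_nonneg hmx)
    have h1 := (hscale m p hp).trans (polySup_le zero_le_one hpA)
    rw [← le_div_iff₀ (htpos m hm)] at h1
    have h2 := bernstein_walsh hr hp (B := 1 / t m)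
      (fun w hw => (le_polySup_closed p hr hw).trans h1) z
    have h3 := Real.log_le_log hpos h2
    rw [Real.log_mul (by have := htpos m hm; positivity) (by positivity), Real.log_pow,
      one_div, Real.log_inv] at h3
    refine le_trans ?_ (add_le_add_left (hLS m) _)
    rw [hL]
    simp only
    rw [div_add' _ _ _ hm'.ne']
    gcongr
    linarith
  have hzero : ∀ z, (0 : ℝ) ∈ {x : ℝ | ∃ m : ℕ, 1 ≤ m ∧ ∃ p : Polynomial ℂ, p.natDegree ≤ m ∧
      (∀ ζ ∈ A₀, ‖p.eval ζ‖ ≤ 1) ∧ x = Real.log ‖p.eval z‖ / m} := fun z =>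
    ⟨1, le_rfl, 1, by simp, by simp, by simp⟩
  have hVub : ∀ z, greenV A₀ z ≤ Sg + Real.log (max 1 (‖z‖ / r)) := fun z =>
    csSup_le ⟨0, hzero z⟩ (hub z)
  have hV0 : ∀ z, 0 ≤ greenV A₀ z := fun z => le_csSup ⟨_, hub z⟩ (hzero z)
  have hev : ∀ z ∈ closedBall (0 : ℂ) r, ∀ ε > 0, ∀ᶠ w in nhds z, greenV A₀ w ≤ Sg + ε := by
    intro z hz ε hε
    have hcont : Continuous (fun w : ℂ => Real.log (max 1 (‖w‖ / r))) := by
      refine Continuous.log (by fun_prop) fun w => ?_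
      exact (zero_lt_one.trans_le (le_max_left _ _)).ne'
    have hz0 : Real.log (max 1 (‖z‖ / r)) < ε := by
      rw [max_eq_left, Real.log_one]
      · exact hε
      · rw [div_le_one hr]; simpa using hz
    filter_upwards [hcont.continuousAt.eventually_lt continuousAt_const hz0] with w hw
    linarith [hVub w]
  have hVs_le : ∀ z ∈ closedBall (0 : ℂ) r, greenVstar A₀ z ≤ Sg := by
    intro z hz
    apply le_of_forall_pos_le_add
    intro ε hε
    refine limsup_le_of_le ?_ (hev z hz ε hε)
    exact (isBoundedUnder_of ⟨0, hV0⟩ : IsBoundedUnder (· ≥ ·) (nhds z) (greenV A₀)).isCoboundedUnder_le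
  have hV_le : ∀ z ∈ closedBall (0 : ℂ) r, greenV A₀ z ≤ greenVstar A₀ z := by
    intro z hz
    refine le_limsup_of_frequently_le ?_ ⟨Sg + 1, hev z hz 1 one_pos⟩
    intro h
    exact h.self_of_nhds le_rfl
  have hVbdd : BddAbove (greenVstar A₀ '' closedBall (0 : ℂ) r) := by
    refine ⟨Sg, ?_⟩
    rintro _ ⟨z, hz, rfl⟩
    exact hVs_le z hz
  have hS : sSup (greenVstar A₀ '' closedBall (0 : ℂ) r) = Sg := by
    apply le_antisymm
    · refine Real.sSup_le ?_ hSg0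
      rintro _ ⟨z, hz, rfl⟩
      exact hVs_le z hz
    · apply ciSup_le
      intro m
      rcases Nat.eq_zero_or_pos m with h0 | hm
      · have : L m = 0 := by simp [hL, h0]
        rw [this]
        have hz : (0 : ℂ) ∈ closedBall (0 : ℂ) r := by simp [hr.le]
        exact (hV0 0).trans ((hV_le 0 hz).trans (le_csSup hVbdd ⟨0, hz, rfl⟩))
      · obtain ⟨z, hz, hz1⟩ := exists_polySup (T m) hr
        rw [hnorm m] at hz1
        refine le_trans ?_ ((hV_le z hz).trans (le_csSup hVbdd ⟨z, hz, rfl⟩))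
        refine le_csSup ⟨_, hub z⟩ ⟨m, hm, Polynomial.C (((t m : ℝ) : ℂ)⁻¹) * T m,
          (Polynomial.natDegree_C_mul_le _ _).trans (hdeg m), ?_, ?_⟩
        · intro ζ hζ
          rw [Polynomial.eval_mul, Polynomial.eval_C, norm_mul, norm_inv, Complex.norm_real,
            Real.norm_of_nonneg (ht0 m), inv_mul_le_iff₀ (htpos m hm), mul_one]
          exact htA m ζ hζ
        · rw [Polynomial.eval_mul, Polynomial.eval_C, norm_mul, norm_inv, Complex.norm_real,
            Real.norm_of_nonneg (ht0 m), hz1, mul_one, Real.log_inv]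
  have htau : tauCap A₀ r = Real.exp (-Sg) := by rw [tauCap, hS]
  have htexp : ∀ m : ℕ, 1 ≤ m → t m ^ (1 / (m : ℝ)) = Real.exp (-L m) := by
    intro m hm
    rw [Real.rpow_def_of_pos (htpos m hm), hL]
    congr 1
    ring
  have hLlow : ∀ q n : ℕ, 1 ≤ n → L q * (1 - q / n) ≤ L n := by
    intro q n hn
    have hn' : (0 : ℝ) < n := by exact_mod_cast hn
    rcases Nat.eq_zero_or_pos q with h0 | hq
    · have : L q = 0 := by simp [hL, h0]
      rw [this, zero_mul]
      exact hL0 n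
    have hq' : (0 : ℝ) < q := by exact_mod_cast hq
    have h1 := hpow q (n / q) n (Nat.mul_div_le n q)
    have h2 := Real.log_le_log (htpos n hn) h1
    rw [Real.log_pow] at h2
    have h3 : (n : ℝ) - q ≤ q * ((n / q : ℕ) : ℝ) := by
      have := Nat.div_add_mod n q
      have h4 := Nat.mod_lt n hq
      have h5 : n ≤ q * (n / q) + q := by omega
      have : (n : ℝ) ≤ q * ((n / q : ℕ) : ℝ) + q := by exact_mod_cast h5
      linarith
    have hlq : -Real.log (t q) = q * L q := by
      rw [hL]; field_simp
    have hln : -Real.log (t n) = n * L n := by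
      rw [hL]; field_simp
    have h6 : ((n : ℝ) - q) * L q ≤ n * L n := by
      have := mul_le_mul_of_nonneg_right h3 (hL0 q)
      rw [← hln]
      have h7 : ((n / q : ℕ) : ℝ) * -Real.log (t q) = q * ((n / q : ℕ) : ℝ) * L q := by
        rw [hlq]; ring
      linarith
    have h8 : L q * (1 - q / n) = ((n : ℝ) - q) * L q / n := by
      field_simp
    rw [h8, div_le_iff₀ hn']
    linarith
  have hLt : Tendsto L atTop (nhds Sg) := by
    rw [tendsto_order]
    constructor
    · intro a ha
      obtain ⟨q, hq⟩ := exists_lt_of_lt_ciSup ha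
      have hlim : Tendsto (fun n : ℕ => L q * (1 - (q : ℝ) / n)) atTop (nhds (L q)) := by
        have := ((tendsto_const_div_atTop_nhds_zero_nat (q : ℝ)).const_sub 1).const_mul (L q)
        simpa using this
      filter_upwards [hlim.eventually (lt_mem_nhds hq), eventually_ge_atTop 1] with n h1 h2
      exact h1.trans_le (hLlow q n h2)
    · intro a ha
      exact Eventually.of_forall fun n => (hLS n).trans_lt ha
  rw [htau]
  constructor
  · refine ((Real.continuous_exp.tendsto _).comp hLt.neg).congr' ?_
    filter_upwards [eventually_ge_atTop 1] with m hm
    exact (htexp m hm).symm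
  · intro m hm
    refine le_of_le_of_eq ?_ (htexp m hm).symm
    exact Real.exp_le_exp.2 (neg_le_neg (hLS m))
end
end
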